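/- Let G=(V,E) be a multigraph without self-loops and let s ∈ V. Then the maximum size of a basic s-cycle packing of G equals the minimum size of an s-cycle cover of G; moreover, there exist a basic s-cycle packing f and a half-integral s-cycle cover x (values in {0,1/2,1}) such that (1/2)·Σ_{e incident to s} f(e) = Σ_{v∈V} x(v). -/

import Mathlib

/-- A multigraph on vertex type `V` with edge type `E`: each edge has an
unordered pair of endpoints.  Parallel edges are distinguished (they are
different elements of `E`), and self-loops are edges whose endpoint pair is
diagonal. -/
structure Multigraph (V : Type) (E : Type) where
  ends : E → Sym2 V

namespace Multigraph

variable {V E : Type}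

/-- A multigraph has no self-loops. -/
def LoopFree (G : Multigraph V E) : Prop := ∀ e : E, ¬ (G.ends e).IsDiag

/-- The degree of a vertex: the number of incident edges (parallel edges
counted with multiplicity). -/
noncomputable def degree (G : Multigraph V E) (v : V) : ℕ :=
  Nat.card {e : E // v ∈ G.ends e}

/-- A walk `(v₀, e₁, v₁, …, e_l, v_l)` of positive length `l ≥ 1` in which
each edge `eᵢ` joins `v_{i-1}` and `vᵢ`. -/
structure Walk (G : Multigraph V E) where
  len : ℕ
  len_pos : 0 < len
  verts : Fin (len + 1) → V
  edges : Fin len → E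
  valid : ∀ i : Fin len, G.ends (edges i) = s(verts i.castSucc, verts i.succ)

namespace Walk

variable {G : Multigraph V E}

/-- The first vertex of a walk. -/
def start (W : G.Walk) : V := W.verts 0

/-- The last vertex of a walk. -/
def finish (W : G.Walk) : V := W.verts (Fin.last W.len)

/-- A cycle: a closed walk of positive length with pairwise distinct edges and
pairwise distinct vertices (except that the first and last vertex coincide). -/
def IsCycle (W : G.Walk) : Prop :=
  W.start = W.finish ∧ Function.Injective W.edges ∧
    Function.Injective fun i : Fin W.len => W.verts i.castSucc

/-- An `s`-cycle: a walk with `v₀ = v_l = s`, with `vᵢ ≠ s` for `0 < i < l`,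
with no U-turns (`eᵢ ≠ e_{i+1}`), and in which every edge occurs at most
twice. -/
def IsSCycle (W : G.Walk) (s : V) : Prop :=
  W.start = s ∧ W.finish = s ∧
  (∀ i : Fin (W.len + 1), i ≠ 0 → i ≠ Fin.last W.len → W.verts i ≠ s) ∧
  (∀ i j : Fin W.len, (i : ℕ) + 1 = (j : ℕ) → W.edges i ≠ W.edges j) ∧
  (∀ e : E, Nat.card {i : Fin W.len // W.edges i = e} ≤ 2)

/-- The multiplicity of a vertex `v` in the multiset `V(W)` of vertices of a
walk `W`. -/
noncomputable def vertCount (W : G.Walk) (v : V) : ℕ :=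
  Nat.card {i : Fin (W.len + 1) // W.verts i = v}

end Walk

/-- `S` is a feedback vertex set: every cycle of `G` meets `S`
(equivalently, `G − S` contains no cycle). -/
def IsFVS (G : Multigraph V E) (S : Set V) : Prop :=
  ∀ W : G.Walk, W.IsCycle → ∃ i, W.verts i ∈ S

/-- The minimum size of a feedback vertex set. -/
noncomputable def fvs [Fintype V] (G : Multigraph V E) : ℕ :=
  sInf {n : ℕ | ∃ S : Set V, G.IsFVS S ∧ S.ncard = n}

/-- `x : V → ℝ≥0` is an `s`-cycle cover: `x s = 0` and every `s`-cycle `C`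
satisfies `x(V(C)) ≥ 1` (vertices counted with multiplicity). -/
def IsSCycleCover (G : Multigraph V E) (s : V) (x : V → ℝ) : Prop :=
  (∀ v, 0 ≤ x v) ∧ x s = 0 ∧
    ∀ W : G.Walk, W.IsSCycle s → 1 ≤ ∑ i, x (W.verts i)

/-- A function is half-integral if it takes values in `{0, 1/2, 1}`. -/
def HalfIntegral (x : V → ℝ) : Prop := ∀ v, x v = 0 ∨ x v = 1/2 ∨ x v = 1

/-- A minimum `s`-cycle cover. -/
def IsMinSCycleCover [Fintype V] (G : Multigraph V E) (s : V) (x : V → ℝ) : Prop :=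
  G.IsSCycleCover s x ∧ ∀ x' : V → ℝ, G.IsSCycleCover s x' → ∑ v, x v ≤ ∑ v, x' v

/-- An `s`-cycle packing: a nonnegative, finitely supported weighting of the
`s`-cycles such that every vertex `v ≠ s` is used (with multiplicity) with
total weight at most `1`. -/
def IsSCyclePacking (G : Multigraph V E) (s : V) (y : G.Walk →₀ ℝ) : Prop :=
  (∀ W, 0 ≤ y W) ∧ (∀ W, y W ≠ 0 → W.IsSCycle s) ∧
    ∀ v : V, v ≠ s → ∑ W ∈ y.support, (W.vertCount v : ℝ) * y W ≤ 1

/-- The size of an `s`-cycle packing. -/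
noncomputable def packingSize {G : Multigraph V E} (y : G.Walk →₀ ℝ) : ℝ :=
  ∑ W ∈ y.support, y W

/-- Number of edges incident to `v` with `f`-value 1. -/
noncomputable def cnt1 (G : Multigraph V E) (f : E → ℝ) (v : V) : ℕ :=
  Nat.card {e : E // v ∈ G.ends e ∧ f e = 1}

/-- Number of edges incident to `v` with `f`-value 1/2. -/
noncomputable def cntH (G : Multigraph V E) (f : E → ℝ) (v : V) : ℕ :=
  Nat.card {e : E // v ∈ G.ends e ∧ f e = 1/2}

/-- type-O: all incident edges have `f`-value 0. -/
def IsTypeO (G : Multigraph V E) (f : E → ℝ) (v : V) : Prop :=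
  ∀ e : E, v ∈ G.ends e → f e = 0

/-- type-I: exactly two incident edges have value 1 and none has value 1/2. -/
def IsTypeI (G : Multigraph V E) (f : E → ℝ) (v : V) : Prop :=
  G.cnt1 f v = 2 ∧ G.cntH f v = 0

/-- type-H: no incident edge has value 1 and exactly two have value 1/2. -/
def IsTypeH (G : Multigraph V E) (f : E → ℝ) (v : V) : Prop :=
  G.cnt1 f v = 0 ∧ G.cntH f v = 2

/-- type-T: exactly one incident edge has value 1 and exactly two have value 1/2. -/
def IsTypeT (G : Multigraph V E) (f : E → ℝ) (v : V) : Prop :=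
  G.cnt1 f v = 1 ∧ G.cntH f v = 2

/-- A basic `s`-cycle packing: `f : E → {0,1/2,1}` with `f(e) ∈ {0,1}` on edges
incident to `s`, every vertex `v ≠ s` of one of the four types O, I, H, T, and
every cycle consisting of edges of value 1/2 (i.e. every half-integral cycle)
containing an odd number of type-T vertices. -/
def IsBasicSCyclePacking (G : Multigraph V E) (s : V) (f : E → ℝ) : Prop :=
  (∀ e : E, f e = 0 ∨ f e = 1/2 ∨ f e = 1) ∧
  (∀ e : E, s ∈ G.ends e → f e = 0 ∨ f e = 1) ∧
  (∀ v : V, v ≠ s →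
    G.IsTypeO f v ∨ G.IsTypeI f v ∨ G.IsTypeH f v ∨ G.IsTypeT f v) ∧
  (∀ W : G.Walk, W.IsCycle → (∀ j, f (W.edges j) = 1/2) →
    Odd (Nat.card {i : Fin W.len // G.IsTypeT f (W.verts i.castSucc)}))

/-- The size of a basic `s`-cycle packing: `(1/2) · Σ_{e ∈ δ(s)} f(e)`. -/
noncomputable def basicSize [Fintype E] (G : Multigraph V E) (s : V) (f : E → ℝ) : ℝ :=
  (1/2) * ∑ e : E, Set.indicator {e' : E | s ∈ G.ends e'} f e

/-- `u` and `v` are connected by a walk avoiding the vertex set `S` and the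
edge set `F` (or `u = v`). -/
def Reach (G : Multigraph V E) (S : Set V) (F : Set E) (u v : V) : Prop :=
  u = v ∨ ∃ W : G.Walk, (∀ i, W.verts i ∉ S) ∧ (∀ j, W.edges j ∉ F) ∧
    W.start = u ∧ W.finish = v

/-- The edge `e` belongs to the set `B` of the `s`-cycle cover reduction with
respect to the set `X`: `e` joins `s` to some `u ∉ X`, `e` is a bridge of
`G − X` (its endpoints are disconnected in `G − X − e`), and the connected
component of `u` in `G − X − s` is a tree (no cycle of `G − X − s` passes
through a vertex reachable from `u` in `G − X − s`). -/
def InB (G : Multigraph V E) (s : V) (X : Set V) (e : E) : Prop :=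
  ∃ u : V, G.ends e = s(s, u) ∧ u ≠ s ∧ u ∉ X ∧ s ∉ X ∧
    ¬ G.Reach X {e} s u ∧
    ¬ ∃ W : G.Walk, W.IsCycle ∧ (∀ i, W.verts i ∉ X ∪ {s}) ∧
        G.Reach (X ∪ {s}) ∅ u W.start

/-- The graph `G' = (V, E')` obtained from `G` by the `s`-cycle cover
reduction with respect to a half-integral `s`-cycle cover `x`: with
`X = x⁻¹(1)`, insert a double edge (two new parallel edges) between `s` and
each `v ∈ X`, and delete the edges of `B`. -/
def reduced (G : Multigraph V E) (s : V) (x : V → ℝ) :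
    Multigraph V ({e : E // ¬ G.InB s {v : V | x v = 1} e} ⊕ ({v : V // x v = 1} × Bool)) where
  ends := fun e =>
    match e with
    | .inl e' => G.ends e'.val
    | .inr p => s(s, p.1.val)

/-- The graph `G − s` obtained by deleting the vertex `s` and all incident
edges (the vertex `s` is kept as an isolated vertex). -/
def deleteVertex (G : Multigraph V E) (s : V) :
    Multigraph V {e : E // s ∉ G.ends e} where
  ends := fun e => G.ends e.val

/-- An `f`-augmenting walk for a basic `s`-cycle packing `f`:
(1) it starts at `s`; (2) its first edge has value 0; (3) its edges are
pairwise distinct; (4) its vertices `v₀,…,v_{l-1}` are pairwise distinct;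
(5) each interior vertex `vᵢ` (`1 ≤ i ≤ l-1`) is type-O, or type-I with
`f(e) = 1` for at least one of `e ∈ {eᵢ, e_{i+1}}`; (6) if the last vertex
`v_l` equals `vᵢ` for some `i < l` then: `v_l = s` and `f(e_l) = 0`, or `v_l`
is type-O, or `v_l` is type-I and `f(e) = 1` for at least one of
`e ∈ {eᵢ, e_l}`; (7) if `v_l` is a new vertex then it is type-H or type-T. -/
def IsAugmentingWalk (G : Multigraph V E) (s : V) (f : E → ℝ) (W : G.Walk) : Prop :=
  W.start = s ∧
  f (W.edges ⟨0, W.len_pos⟩) = 0 ∧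
  Function.Injective W.edges ∧
  Function.Injective (fun i : Fin W.len => W.verts i.castSucc) ∧
  (∀ i : Fin W.len, 0 < i.val →
    (G.IsTypeO f (W.verts i.castSucc) ∨
      (G.IsTypeI f (W.verts i.castSucc) ∧
        (f (W.edges ⟨i.val - 1, Nat.lt_of_le_of_lt (Nat.sub_le _ _) i.isLt⟩) = 1 ∨
          f (W.edges i) = 1)))) ∧
  (∀ i : Fin W.len, W.finish = W.verts i.castSucc →
    ((W.finish = s ∧ f (W.edges ⟨W.len - 1, Nat.sub_lt W.len_pos Nat.one_pos⟩) = 0) ∨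
     (W.finish ≠ s ∧ G.IsTypeO f W.finish) ∨
     (W.finish ≠ s ∧ G.IsTypeI f W.finish ∧
       (f (W.edges ⟨i.val - 1, Nat.lt_of_le_of_lt (Nat.sub_le _ _) i.isLt⟩) = 1 ∨
         f (W.edges ⟨W.len - 1, Nat.sub_lt W.len_pos Nat.one_pos⟩) = 1)))) ∧
  ((∀ i : Fin W.len, W.finish ≠ W.verts i.castSucc) →
    (G.IsTypeH f W.finish ∨ G.IsTypeT f W.finish))

/-- `g = f_W` is obtained from `f` by augmenting along the walk `W`.
If `v_l = s` (so `h = l`), the values of `f` on `e₁,…,e_l` are flipped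
(`f ↦ 1 − f`).  If `v_l ≠ s` equals an earlier vertex `vᵢ` (so `h = i`), the
values on `e₁,…,e_h` are flipped and the values on `e_{h+1},…,e_l` are set to
`1/2`.  If `v_l ≠ s` is a new vertex (type-H or type-T, with `h = l`), the
values on `e₁,…,e_l` are flipped and, on the half-integral cycle `C` of `v_l`
(traversed from `t₀ = v_l` in either direction), the edges of the segment
`Pᵢ` between consecutive markers `tᵢ, t_{i+1}` (the markers being `v_l`
together with the type-T vertices of `C`) receive value `0` for even `i` and
`1` for odd `i`; the segment index of an edge is the number of type-T
vertices strictly preceding it along the traversal.  All other edges keep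
their `f`-value. -/
def AugmentedAlong (G : Multigraph V E) (s : V) (f : E → ℝ) (W : G.Walk) (g : E → ℝ) : Prop :=
  -- Case A : the walk returns to `s`.
  (W.finish = s ∧
    (∀ j : Fin W.len, g (W.edges j) = 1 - f (W.edges j)) ∧
    (∀ e : E, (∀ j, e ≠ W.edges j) → g e = f e)) ∨
  -- Case B : the last vertex is a repeated vertex `vᵢ ≠ s` (type-O or type-I).
  (W.finish ≠ s ∧
    (∃ i : Fin W.len, W.finish = W.verts i.castSucc ∧
      (∀ j : Fin W.len, j.val < i.val → g (W.edges j) = 1 - f (W.edges j)) ∧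
      (∀ j : Fin W.len, i.val ≤ j.val → g (W.edges j) = 1/2) ∧
      (∀ e : E, (∀ j, e ≠ W.edges j) → g e = f e))) ∨
  -- Case C : the last vertex is a new vertex of type-H or type-T.
  (W.finish ≠ s ∧ (∀ i : Fin W.len, W.finish ≠ W.verts i.castSucc) ∧
    (∃ C : G.Walk, C.IsCycle ∧ C.verts 0 = W.finish ∧
      (∀ j, f (C.edges j) = 1/2) ∧
      (∀ j : Fin W.len, g (W.edges j) = 1 - f (W.edges j)) ∧
      (∀ j : Fin C.len,
        g (C.edges j) =
          if Even (Nat.card {m : Fin C.len //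
              1 ≤ m.val ∧ m.val ≤ j.val ∧ G.IsTypeT f (C.verts m.castSucc)})
          then 0 else 1) ∧
      (∀ e : E, (∀ j, e ≠ W.edges j) → (∀ j, e ≠ C.edges j) → g e = f e)))


end Multigraph


set_option linter.unusedSectionVars false
set_option linter.all false

namespace SC

open Classical Finset

section

variable {V E : Type} [Fintype V] [Fintype E]

/-- Edges incident to `v`. -/
noncomputable def D (G : Multigraph V E) (v : V) : Finset E := univ.filter (fun e => v ∈ G.ends e)

theorem mem_D {G : Multigraph V E} {v : V} {e : E} : e ∈ D G v ↔ v ∈ G.ends e := by simp [D]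

noncomputable def n1 (S : Finset E) (F : E → ℕ) : ℕ := (S.filter (fun e => F e = 2)).card
noncomputable def nH (S : Finset E) (F : E → ℕ) : ℕ := (S.filter (fun e => F e = 1)).card

def Ok (a b : ℕ) : Prop := (a = 0 ∧ b = 0) ∨ (a = 2 ∧ b = 0) ∨ (a = 0 ∧ b = 2) ∨ (a = 1 ∧ b = 2)

theorem n1_erase {S : Finset E} {a : E} (h : a ∈ S) (F : E → ℕ) :
    n1 S F = (if F a = 2 then 1 else 0) + n1 (S.erase a) F := by
  unfold n1
  conv_lhs => rw [← insert_erase h, filter_insert]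
  split_ifs with h1
  · rw [card_insert_of_notMem (by simp)]; omega
  · omega

theorem nH_erase {S : Finset E} {a : E} (h : a ∈ S) (F : E → ℕ) :
    nH S F = (if F a = 1 then 1 else 0) + nH (S.erase a) F := by
  unfold nH
  conv_lhs => rw [← insert_erase h, filter_insert]
  split_ifs with h1
  · rw [card_insert_of_notMem (by simp)]; omega
  · omega

theorem n1_congr {S : Finset E} {F F' : E → ℕ} (h : ∀ e ∈ S, F' e = F e) : n1 S F' = n1 S F := by
  unfold n1; congr 1; apply filter_congr; intro e he; rw [h e he]

theorem nH_congr {S : Finset E} {F F' : E → ℕ} (h : ∀ e ∈ S, F' e = F e) : nH S F' = nH S F := by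
  unfold nH; congr 1; apply filter_congr; intro e he; rw [h e he]

theorem nH_zero {S : Finset E} {F : E → ℕ} : nH S F = 0 ↔ ∀ e ∈ S, F e ≠ 1 := by
  unfold nH; rw [card_eq_zero, filter_eq_empty_iff]

theorem n1_zero {S : Finset E} {F : E → ℕ} : n1 S F = 0 ↔ ∀ e ∈ S, F e ≠ 2 := by
  unfold n1; rw [card_eq_zero, filter_eq_empty_iff]

/-- flipping two edges at a vertex. -/
theorem ok_flip {S : Finset E} {F F' : E → ℕ} {a b : E} (ha : a ∈ S) (hb : b ∈ S) (hab : a ≠ b)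
    (hle : ∀ e, F e ≤ 2)
    (hok : Ok (n1 S F) (nH S F)) (h0 : nH S F = 0) (ht : n1 S F = 0 ∨ F a = 2 ∨ F b = 2)
    (hag : ∀ e ∈ S, e ≠ a → e ≠ b → F' e = F e) (hFa : F' a = 2 - F a) (hFb : F' b = 2 - F b) :
    Ok (n1 S F') (nH S F') := by
  have hb' : b ∈ S.erase a := mem_erase.2 ⟨hab.symm, hb⟩
  have ha1 := nH_zero.1 h0 a ha
  have hb1 := nH_zero.1 h0 b hb
  have hc1 : n1 ((S.erase a).erase b) F' = n1 ((S.erase a).erase b) F :=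
    n1_congr (fun e he => by simp only [mem_erase] at he; exact hag e he.2.2 he.2.1 he.1)
  have hc2 : nH ((S.erase a).erase b) F' = nH ((S.erase a).erase b) F :=
    nH_congr (fun e he => by simp only [mem_erase] at he; exact hag e he.2.2 he.2.1 he.1)
  rw [n1_erase ha, n1_erase hb'] at ht hok ⊢
  rw [nH_erase ha, nH_erase hb'] at h0 hok ⊢
  rw [hc1, hc2, hFa, hFb]
  have h2a := hle a
  have h2b := hle b
  unfold Ok at *
  interval_cases F a <;> interval_cases F b <;> simp at * <;> omega

/-- halving two edges at a vertex. -/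
theorem ok_half {S : Finset E} {F F' : E → ℕ} {a b : E} (ha : a ∈ S) (hb : b ∈ S) (hab : a ≠ b)
    (hle : ∀ e, F e ≤ 2)
    (hok : Ok (n1 S F) (nH S F)) (h0 : nH S F = 0) (ht : n1 S F = 0 ∨ F a = 2 ∨ F b = 2)
    (hag : ∀ e ∈ S, e ≠ a → e ≠ b → F' e = F e) (hFa : F' a = 1) (hFb : F' b = 1) :
    Ok (n1 S F') (nH S F') := by
  have hb' : b ∈ S.erase a := mem_erase.2 ⟨hab.symm, hb⟩
  have ha1 := nH_zero.1 h0 a ha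
  have hb1 := nH_zero.1 h0 b hb
  have hc1 : n1 ((S.erase a).erase b) F' = n1 ((S.erase a).erase b) F :=
    n1_congr (fun e he => by simp only [mem_erase] at he; exact hag e he.2.2 he.2.1 he.1)
  have hc2 : nH ((S.erase a).erase b) F' = nH ((S.erase a).erase b) F :=
    nH_congr (fun e he => by simp only [mem_erase] at he; exact hag e he.2.2 he.2.1 he.1)
  rw [n1_erase ha, n1_erase hb'] at ht hok ⊢
  rw [nH_erase ha, nH_erase hb'] at h0 hok ⊢
  rw [hc1, hc2, hFa, hFb]
  have h2a := hle a
  have h2b := hle b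
  unfold Ok at *
  interval_cases F a <;> interval_cases F b <;> simp at * <;> omega

/-- lollipop at a vertex. -/
theorem ok_lolli {S : Finset E} {F F' : E → ℕ} {e a b : E} (he : e ∈ S) (ha : a ∈ S) (hb : b ∈ S)
    (hab : a ≠ b) (hea : e ≠ a) (heb : e ≠ b)
    (hle : ∀ e, F e ≤ 2)
    (hok : Ok (n1 S F) (nH S F)) (h0 : nH S F = 0) (ht : n1 S F = 0 ∨ F e = 2 ∨ F a = 2)
    (ht' : n1 S F = 0 ∨ F e = 2 ∨ F b = 2)
    (hag : ∀ d ∈ S, d ≠ e → d ≠ a → d ≠ b → F' d = F d)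
    (hFe : F' e = 2 - F e) (hFa : F' a = 1) (hFb : F' b = 1) :
    Ok (n1 S F') (nH S F') := by
  have ha' : a ∈ S.erase e := mem_erase.2 ⟨hea.symm, ha⟩
  have hb' : b ∈ (S.erase e).erase a := mem_erase.2 ⟨hab.symm, mem_erase.2 ⟨heb.symm, hb⟩⟩
  have he1 := nH_zero.1 h0 e he
  have ha1 := nH_zero.1 h0 a ha
  have hb1 := nH_zero.1 h0 b hb
  have hc1 : n1 (((S.erase e).erase a).erase b) F' = n1 (((S.erase e).erase a).erase b) F :=
    n1_congr (fun d hd => by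
      simp only [mem_erase] at hd; exact hag d hd.2.2.2 hd.2.2.1 hd.2.1 hd.1)
  have hc2 : nH (((S.erase e).erase a).erase b) F' = nH (((S.erase e).erase a).erase b) F :=
    nH_congr (fun d hd => by
      simp only [mem_erase] at hd; exact hag d hd.2.2.2 hd.2.2.1 hd.2.1 hd.1)
  rw [n1_erase he, n1_erase ha', n1_erase hb'] at ht ht' hok ⊢
  rw [nH_erase he, nH_erase ha', nH_erase hb'] at h0 hok ⊢
  rw [hc1, hc2, hFe, hFa, hFb]
  have h2e := hle e
  have h2a := hle a
  have h2b := hle b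
  unfold Ok at *
  interval_cases F e <;> interval_cases F a <;> interval_cases F b <;> simp at * <;> omega

theorem n1_upd_not {S : Finset E} {F : E → ℕ} {a : E} (k : ℕ) (h : a ∉ S) :
    n1 S (Function.update F a k) = n1 S F :=
  n1_congr (fun e he => Function.update_of_ne (by rintro rfl; exact h he) _ _)

theorem nH_upd_not {S : Finset E} {F : E → ℕ} {a : E} (k : ℕ) (h : a ∉ S) :
    nH S (Function.update F a k) = nH S F :=
  nH_congr (fun e he => Function.update_of_ne (by rintro rfl; exact h he) _ _)

theorem n1_upd {S : Finset E} {F : E → ℕ} {a : E} (k : ℕ) (h : a ∈ S) :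
    n1 S (Function.update F a k) + (if F a = 2 then 1 else 0) = n1 S F + (if k = 2 then 1 else 0) := by
  rw [n1_erase h F, n1_erase h, n1_upd_not k (by simp)]
  simp only [Function.update_self]; omega

theorem nH_upd {S : Finset E} {F : E → ℕ} {a : E} (k : ℕ) (h : a ∈ S) :
    nH S (Function.update F a k) + (if F a = 1 then 1 else 0) = nH S F + (if k = 1 then 1 else 0) := by
  rw [nH_erase h F, nH_erase h, nH_upd_not k (by simp)]
  simp only [Function.update_self]; omega

structure PB (G : Multigraph V E) (s : V) (F : E → ℕ) : Prop where
  le : ∀ e, F e ≤ 2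
  ats : ∀ e, s ∈ G.ends e → F e ≠ 1
  ok : ∀ v, v ≠ s → Ok (n1 (D G v) F) (nH (D G v) F)

/-- Loops only at `s`. -/
def LS (G : Multigraph V E) (s : V) : Prop := ∀ e v, G.ends e = s(v, v) → v = s

noncomputable def halves (F : E → ℕ) : ℕ := nH univ F

theorem round_aux (G : Multigraph V E) (s u : V) (hG : LS G s) (hus : u ≠ s) :
    ∀ (n : ℕ) (F : E → ℕ) (v : V), halves F = n → (∀ e, F e ≤ 2) →
      (∀ e, s ∈ G.ends e → F e ≠ 1) → v ≠ s → v ≠ u →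
      (∀ w, w ≠ s → w ≠ u → w ≠ v → Ok (n1 (D G w) F) (nH (D G w) F)) →
      nH (D G u) F = 1 → n1 (D G u) F ≤ 1 → nH (D G v) F = 1 → n1 (D G v) F ≤ 2 →
      ∃ F' : E → ℕ, (∀ e, F' e ≤ 2) ∧ (∀ e, F e ≠ 1 → F' e = F e) ∧ halves F' < halves F ∧
        (∀ w, w ≠ s → w ≠ u → Ok (n1 (D G w) F') (nH (D G w) F')) ∧
        nH (D G u) F' = 0 ∧ n1 (D G u) F' ≤ 2 := by
  intro n
  induction n using Nat.strong_induction_on with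
  | _ n ih =>
  intro F v hn hle hats hvs hvu hok hu1 hu2 hv1 hv2
  obtain ⟨a, ha⟩ : ∃ a, a ∈ D G v ∧ F a = 1 := by
    by_contra hcon
    push Not at hcon
    have := nH_zero.2 hcon
    omega
  obtain ⟨hav, ha1⟩ := ha
  obtain ⟨w, hw⟩ := Sym2.mem_iff_exists.1 (mem_D.1 hav)
  have hws : w ≠ s := by
    rintro rfl
    exact hats a (by rw [hw]; simp) ha1
  have hwv : w ≠ v := by
    rintro rfl
    exact hws (hG a _ hw)
  have haw : a ∈ D G w := mem_D.2 (by rw [hw]; simp)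
  have hnot : ∀ z, z ≠ v → z ≠ w → a ∉ D G z := by
    intro z hz1 hz2 hz
    have := mem_D.1 hz
    rw [hw, Sym2.mem_iff] at this
    tauto
  obtain ⟨k, hk, hkv⟩ : ∃ k, (k = 0 ∨ k = 2) ∧
      Ok (n1 (D G v) (Function.update F a k)) (nH (D G v) (Function.update F a k)) := by
    by_cases hone : n1 (D G v) F = 1
    · refine ⟨2, Or.inr rfl, ?_⟩
      have h1 := n1_upd (F := F) 2 hav
      have h2 := nH_upd (F := F) 2 hav
      simp [ha1] at h1 h2
      unfold Ok; omega
    · refine ⟨0, Or.inl rfl, ?_⟩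
      have h1 := n1_upd (F := F) 0 hav
      have h2 := nH_upd (F := F) 0 hav
      simp [ha1] at h1 h2
      unfold Ok; omega
  set F1 := Function.update F a k with hF1
  have hk1 : k ≠ 1 := by omega
  have hhalf : halves F1 < halves F := by
    have h2 := nH_upd (F := F) (S := univ) k (mem_univ a)
    rw [← hF1] at h2
    simp [ha1, hk1] at h2
    unfold halves; omega
  have hle1 : ∀ e, F1 e ≤ 2 := by
    intro e; by_cases h : e = a
    · subst h; simp [hF1]; omega
    · simp [hF1, h, hle]
  have hsame : ∀ e, F e ≠ 1 → F1 e = F e := by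
    intro e he; by_cases h : e = a
    · subst h; exact absurd ha1 he
    · simp [hF1, h]
  have h1 := n1_upd (F := F) k haw
  have h2 := nH_upd (F := F) k haw
  rw [← hF1] at h1 h2
  simp [ha1, hk1] at h1 h2
  by_cases hwu : w = u
  · subst hwu
    refine ⟨F1, hle1, hsame, hhalf, ?_, ?_, ?_⟩
    · intro z hz1 hz2
      by_cases hzv : z = v
      · subst hzv; exact hkv
      · rw [hF1, n1_upd_not k (hnot z hzv hz2), nH_upd_not k (hnot z hzv hz2)]
        exact hok z hz1 hz2 hzv
    · omega
    · split_ifs at h1 <;> omega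
  · have hw0 := hok w hws hwu hwv
    have hpos : nH (D G w) F ≠ 0 := by
      intro h; exact nH_zero.1 h a haw ha1
    obtain ⟨F', q1, q2, q3, q4, q5, q6⟩ := ih (halves F1) (by omega) F1 w rfl hle1
      (fun e he => by rw [hsame e (hats e he)]; exact hats e he) hws hwu
      (by
        intro z hz1 hz2 hz3
        by_cases hzv : z = v
        · subst hzv; exact hkv
        · rw [hF1, n1_upd_not k (hnot z hzv hz3), nH_upd_not k (hnot z hzv hz3)]
          exact hok z hz1 hz2 hzv)
      (by rw [hF1, nH_upd_not k (hnot u (Ne.symm hvu) (Ne.symm hwu))]; exact hu1)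
      (by rw [hF1, n1_upd_not k (hnot u (Ne.symm hvu) (Ne.symm hwu))]; exact hu2)
      (by unfold Ok at hw0; omega)
      (by unfold Ok at hw0; split_ifs at h1 <;> omega)
    refine ⟨F', q1, ?_, by omega, q4, q5, q6⟩
    intro e he
    rw [← hsame e he]
    exact q2 e (by rw [hsame e he]; exact he)

theorem round (G : Multigraph V E) (s u : V) (hG : LS G s) (hus : u ≠ s) (F : E → ℕ)
    (hF : PB G s F) (hu : nH (D G u) F ≠ 0) :
      ∃ F' : E → ℕ, (∀ e, F' e ≤ 2) ∧ (∀ e, F e ≠ 1 → F' e = F e) ∧ halves F' < halves F ∧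
        (∀ w, w ≠ s → w ≠ u → Ok (n1 (D G w) F') (nH (D G w) F')) ∧
        nH (D G u) F' = 0 ∧ n1 (D G u) F' ≤ 2 := by
  obtain ⟨a, hau, ha1⟩ : ∃ a, a ∈ D G u ∧ F a = 1 := by
    by_contra hcon
    push Not at hcon
    exact hu (nH_zero.2 hcon)
  obtain ⟨w, hw⟩ := Sym2.mem_iff_exists.1 (mem_D.1 hau)
  have hws : w ≠ s := by
    rintro rfl
    exact hF.ats a (by rw [hw]; simp) ha1
  have hwu : w ≠ u := by
    rintro rfl
    exact hws (hG a _ hw)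
  have haw : a ∈ D G w := mem_D.2 (by rw [hw]; simp)
  have hnot : ∀ z, z ≠ u → z ≠ w → a ∉ D G z := by
    intro z hz1 hz2 hz
    have := mem_D.1 hz
    rw [hw, Sym2.mem_iff] at this
    tauto
  set F1 := Function.update F a 0 with hF1
  have hhalf : halves F1 < halves F := by
    have h2 := nH_upd (F := F) (S := univ) 0 (mem_univ a)
    rw [← hF1] at h2
    simp [ha1] at h2
    unfold halves; omega
  have hle1 : ∀ e, F1 e ≤ 2 := by
    intro e; by_cases h : e = a
    · subst h; simp [hF1]
    · simp [hF1, h, hF.le]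
  have hsame : ∀ e, F e ≠ 1 → F1 e = F e := by
    intro e he; by_cases h : e = a
    · subst h; exact absurd ha1 he
    · simp [hF1, h]
  have h1 := n1_upd (F := F) 0 haw
  have h2 := nH_upd (F := F) 0 haw
  have h3 := n1_upd (F := F) 0 hau
  have h4 := nH_upd (F := F) 0 hau
  rw [← hF1] at h1 h2 h3 h4
  simp [ha1] at h1 h2 h3 h4
  have hpos : nH (D G w) F ≠ 0 := by
    intro h; exact nH_zero.1 h a haw ha1
  have okw := hF.ok w hws
  have oku := hF.ok u hus
  unfold Ok at okw oku
  obtain ⟨F', q1, q2, q3, q4, q5, q6⟩ := round_aux G s u hG hus (halves F1) F1 w rfl hle1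
    (fun e he => by rw [hsame e (hF.ats e he)]; exact hF.ats e he) hws hwu
    (fun z hz1 hz2 hz3 => by
      rw [hF1, n1_upd_not 0 (hnot z hz2 hz3), nH_upd_not 0 (hnot z hz2 hz3)]
      exact hF.ok z hz1)
    (by omega) (by omega) (by omega) (by omega)
  refine ⟨F', q1, ?_, by omega, q4, q5, q6⟩
  intro e he
  rw [← hsame e he]
  exact q2 e (by rw [hsame e he]; exact he)


/-- non-loop edge at `s`. -/
def Nl (G : Multigraph V E) (s : V) (e : E) : Prop := ∃ w, w ≠ s ∧ G.ends e = s(s, w)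

def Act (G : Multigraph V E) (s : V) (F : E → ℕ) (X : Finset E) (e : E) : Prop :=
  Nl G s e ∧ ((F e = 0 ∧ e ∉ X) ∨ (F e = 2 ∧ e ∈ X))

def Out1 (G : Multigraph V E) (s : V) (F : E → ℕ) (X : Finset E) : Prop :=
  ∃ (F' : E → ℕ) (g : E), PB G s F' ∧ Act G s F X g ∧ F' g = 2 - F g ∧
    ∀ e, s ∈ G.ends e → e ≠ g → F' e = F e

structure Cyc (G : Multigraph V E) (s : V) (F : E → ℕ) (C : Finset E) (g1 g2 : E) : Prop where
  ne : g1 ≠ g2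
  ats : ∀ e, s ∈ G.ends e → (e ∈ C ↔ e = g1 ∨ e = g2)
  loc : ∀ v, v ≠ s → (∀ e ∈ C, v ∉ G.ends e) ∨ ∃ a b, a ≠ b ∧ a ∈ C ∧ b ∈ C ∧ v ∈ G.ends a ∧
    v ∈ G.ends b ∧ (∀ e ∈ C, v ∈ G.ends e → e = a ∨ e = b) ∧ nH (D G v) F = 0 ∧
    (n1 (D G v) F = 0 ∨ F a = 2 ∨ F b = 2)

theorem Cyc.symm {G : Multigraph V E} {s : V} {F : E → ℕ} {C : Finset E} {g1 g2 : E}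
    (h : Cyc G s F C g1 g2) : Cyc G s F C g2 g1 :=
  ⟨h.ne.symm, fun e he => by rw [h.ats e he, or_comm], h.loc⟩

def Out2 (G : Multigraph V E) (s : V) (F : E → ℕ) (X : Finset E) : Prop :=
  ∃ (F1 : E → ℕ) (C : Finset E) (g1 g2 : E), PB G s F1 ∧ (∀ e, s ∈ G.ends e → F1 e = F e) ∧
    Act G s F X g1 ∧ Act G s F X g2 ∧ Cyc G s F1 C g1 g2

/-- contraction of `u` into `s`. -/
noncomputable def con (G : Multigraph V E) (s u : V) : Multigraph V E :=
  ⟨fun e => Sym2.map (fun v => if v = u then s else v) (G.ends e)⟩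

theorem mem_con {G : Multigraph V E} {s u v : V} (hs : v ≠ s) (hu : v ≠ u) (e : E) :
    v ∈ (con G s u).ends e ↔ v ∈ G.ends e := by
  simp only [con, Sym2.mem_map]
  constructor
  · rintro ⟨a, ha, h⟩
    split_ifs at h
    · exact absurd h.symm hs
    · rwa [← h]
  · intro h
    exact ⟨v, h, by simp [hu]⟩

theorem u_notMem_con {G : Multigraph V E} {s u : V} (hu : u ≠ s) (e : E) :
    u ∉ (con G s u).ends e := by
  simp only [con, Sym2.mem_map]
  rintro ⟨a, ha, h⟩
  split_ifs at h with h1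
  · exact hu h.symm
  · exact h1 h

theorem s_mem_con {G : Multigraph V E} {s u : V} (e : E) :
    s ∈ (con G s u).ends e ↔ s ∈ G.ends e ∨ u ∈ G.ends e := by
  simp only [con, Sym2.mem_map]
  constructor
  · rintro ⟨a, ha, h⟩
    split_ifs at h with h1
    · subst h1; exact Or.inr ha
    · subst h; exact Or.inl ha
  · rintro (h | h)
    · exact ⟨s, h, by split_ifs <;> rfl⟩
    · exact ⟨u, h, by simp⟩

theorem con_ends {G : Multigraph V E} {s u : V} {e : E} {a b : V} (h : G.ends e = s(a, b)) :
    (con G s u).ends e = s(if a = u then s else a, if b = u then s else b) := by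
  simp [con, h]

theorem Nl_con {G : Multigraph V E} {s u : V} {e : E} (h : Nl (con G s u) s e) :
    (∃ w, w ≠ s ∧ w ≠ u ∧ G.ends e = s(s, w)) ∨ ∃ w, w ≠ s ∧ w ≠ u ∧ G.ends e = s(u, w) := by
  obtain ⟨w, hws, h⟩ := h
  have key : ∀ a b, G.ends e = s(a, b) → (if a = u then s else a) = s → (if b = u then s else b) = w →
      (∃ w, w ≠ s ∧ w ≠ u ∧ G.ends e = s(s, w)) ∨ ∃ w, w ≠ s ∧ w ≠ u ∧ G.ends e = s(u, w) := by
    intro a b hab h1 h2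
    by_cases hb : b = u
    · rw [if_pos hb] at h2; exact absurd h2.symm hws
    · rw [if_neg hb] at h2; subst h2
      by_cases ha : a = u
      · subst ha; exact Or.inr ⟨b, hws, hb, hab⟩
      · rw [if_neg ha] at h1; subst h1; exact Or.inl ⟨b, hws, hb, hab⟩
  obtain ⟨⟨a, b⟩, hab⟩ := Quot.exists_rep (G.ends e)
  have hab : G.ends e = s(a, b) := hab.symm
  rw [con_ends hab, Sym2.eq_iff] at h
  rcases h with ⟨h1, h2⟩ | ⟨h1, h2⟩
  · exact key a b hab h1 h2
  · exact key b a (by rw [hab, Sym2.eq_swap]) h2 h1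

theorem D_con {G : Multigraph V E} {s u v : V} (hs : v ≠ s) (hu : v ≠ u) :
    D (con G s u) v = D G v := by
  ext e; rw [mem_D, mem_D, mem_con hs hu]

theorem LS_con {G : Multigraph V E} {s u : V} (h : LS G s) (hu : u ≠ s) : LS (con G s u) s := by
  intro e v hv
  by_contra hvs
  have hvu : v ≠ u := by
    rintro rfl; exact u_notMem_con hu e (by rw [hv]; simp)
  obtain ⟨⟨a, b⟩, hab⟩ := Quot.exists_rep (G.ends e)
  have hab : G.ends e = s(a, b) := hab.symm
  rw [con_ends hab, Sym2.eq_iff] at hv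
  have h1 : (if a = u then s else a) = v := by tauto
  have h2 : (if b = u then s else b) = v := by tauto
  split_ifs at h1 with h3
  · exact hvs h1.symm
  split_ifs at h2 with h4
  · exact hvs h2.symm
  subst h1; subst h2
  exact hvs (h e _ hab)

theorem PB_con {G : Multigraph V E} {s u : V} {F : E → ℕ} (h : PB G s F) (hu : u ≠ s)
    (h0 : nH (D G u) F = 0) : PB (con G s u) s F := by
  refine ⟨h.le, ?_, ?_⟩
  · intro e he
    rcases s_mem_con e |>.1 he with h1 | h1
    · exact h.ats e h1
    · exact nH_zero.1 h0 e (mem_D.2 h1)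
  · intro v hv
    by_cases hvu : v = u
    · subst hvu
      left
      have : D (con G s v) v = ∅ := by
        ext e; rw [mem_D]; simp [u_notMem_con hu e]
      rw [this]; simp [n1, nH]
    · rw [D_con hv hvu]; exact h.ok v hv

theorem PB_lift {G : Multigraph V E} {s u : V} {F : E → ℕ} (h : PB (con G s u) s F)
    (h0 : Ok (n1 (D G u) F) (nH (D G u) F)) : PB G s F := by
  refine ⟨h.le, fun e he => h.ats e ((s_mem_con e).2 (Or.inl he)), ?_⟩
  intro v hv
  by_cases hvu : v = u
  · subst hvu; exact h0
  · rw [← D_con hv hvu]; exact h.ok v hv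

section lifts

variable {G : Multigraph V E} {s u : V} {F : E → ℕ} {X X' : Finset E} {e : E}

theorem lift1 (hF : PB G s F) (hus : u ≠ s) (he : G.ends e = s(s, u)) (h0 : nH (D G u) F = 0)
    (hact : Act G s F X e) (h1 : ∀ g, u ∉ G.ends g → Act (con G s u) s F X' g → Act G s F X g)
    (h2 : ∀ g, u ∈ G.ends g → Act (con G s u) s F X' g → n1 (D G u) F = 0 ∨ F e = 2 ∨ F g = 2)
    (h : Out1 (con G s u) s F X') : Out1 G s F X := by
  obtain ⟨F', g, hP, hg, hFg, hag⟩ := h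
  have heu : e ∈ D G u := mem_D.2 (by rw [he]; simp)
  by_cases hug : u ∈ G.ends g
  · have hgw : ∃ w, w ≠ s ∧ w ≠ u ∧ G.ends g = s(u, w) := by
      rcases Nl_con hg.1 with ⟨w, hw1, hw2, hw3⟩ | h
      · rw [hw3, Sym2.mem_iff] at hug; tauto
      · exact h
    obtain ⟨w, hws, hwu, hgw⟩ := hgw
    have hsg : s ∉ G.ends g := by rw [hgw, Sym2.mem_iff]; tauto
    have hge : g ≠ e := by
      rintro rfl; apply hsg; rw [he]; simp
    refine ⟨Function.update F' e (2 - F e), e, ⟨?_, ?_, ?_⟩, hact, by simp, ?_⟩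
    · intro d; by_cases hd : d = e
      · subst hd; simp
      · simp [hd, hP.le]
    · intro d hd; by_cases hde : d = e
      · subst hde
        have := hF.ats d hd
        have := hF.le d
        simp; omega
      · simp [hde]; exact hP.ats d ((s_mem_con d).2 (Or.inl hd))
    · intro v hv
      by_cases hvu : v = u
      · subst hvu
        refine ok_flip heu (mem_D.2 hug) hge.symm hF.le (hF.ok v hv) h0 (h2 g hug hg) ?_ (by simp)
          (by simp [hge, hFg])
        intro d hd hde hdg
        simp only [Function.update_of_ne hde]
        exact hag d ((s_mem_con d).2 (Or.inr (mem_D.1 hd))) hdg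
      · have hev : e ∉ D G v := by rw [mem_D, he, Sym2.mem_iff]; tauto
        rw [n1_upd_not _ hev, nH_upd_not _ hev, ← D_con hv hvu]
        exact hP.ok v hv
    · intro d hd hde
      rw [Function.update_of_ne hde]
      exact hag d ((s_mem_con d).2 (Or.inl hd)) (by rintro rfl; exact hsg hd)
  · refine ⟨F', g, PB_lift hP ?_, h1 g hug hg, hFg, fun d hd hdg => hag d ((s_mem_con d).2 (Or.inl hd)) hdg⟩
    have hag' : ∀ d ∈ D G u, F' d = F d := fun d hd =>
      hag d ((s_mem_con d).2 (Or.inr (mem_D.1 hd))) (by rintro rfl; exact hug (mem_D.1 hd))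
    rw [n1_congr hag', nH_congr hag']
    exact hF.ok u hus

theorem lift2_one (hF : PB G s F) (hus : u ≠ s) (he : G.ends e = s(s, u)) (h0 : nH (D G u) F = 0)
    (hact : Act G s F X e) (h1 : ∀ g, u ∉ G.ends g → Act (con G s u) s F X' g → Act G s F X g)
    (h2 : ∀ g, u ∈ G.ends g → Act (con G s u) s F X' g → n1 (D G u) F = 0 ∨ F e = 2 ∨ F g = 2)
    {F1 : E → ℕ} {C : Finset E} {g1 g2 : E} (hP : PB (con G s u) s F1)
    (hag : ∀ e, s ∈ (con G s u).ends e → F1 e = F e) (hg1 : Act (con G s u) s F X' g1)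
    (hg2 : Act (con G s u) s F X' g2) (hC : Cyc (con G s u) s F1 C g1 g2)
    (hu1 : u ∈ G.ends g1) (hu2 : u ∉ G.ends g2) : Out2 G s F X := by
  have heu : e ∈ D G u := mem_D.2 (by rw [he]; simp)
  have hes : s ∈ G.ends e := by rw [he]; simp
  have hagu : ∀ d ∈ D G u, F1 d = F d := fun d hd => hag d ((s_mem_con d).2 (Or.inr (mem_D.1 hd)))
  obtain ⟨w, hws, hwu, hgw⟩ : ∃ w, w ≠ s ∧ w ≠ u ∧ G.ends g1 = s(u, w) := by
    rcases Nl_con hg1.1 with ⟨w, hw1, hw2, hw3⟩ | h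
    · rw [hw3, Sym2.mem_iff] at hu1; tauto
    · exact h
  have hsg : s ∉ G.ends g1 := by rw [hgw, Sym2.mem_iff]; tauto
  have hge : g1 ≠ e := by rintro rfl; exact hsg hes
  have hmem : ∀ d, s ∈ (con G s u).ends d → (d ∈ C ↔ d = g1 ∨ d = g2) := hC.ats
  have hg1C : g1 ∈ C := (hmem g1 ((s_mem_con g1).2 (Or.inr hu1))).2 (Or.inl rfl)
  refine ⟨F1, insert e C, e, g2, PB_lift hP ?_, fun d hd => hag d ((s_mem_con d).2 (Or.inl hd)), hact,
    h1 g2 hu2 hg2, ?_, ?_, ?_⟩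
  · rw [n1_congr hagu, nH_congr hagu]; exact hF.ok u hus
  · rintro rfl; exact hu2 (mem_D.1 heu)
  · intro d hd
    rw [mem_insert, hmem d ((s_mem_con d).2 (Or.inl hd))]
    constructor
    · rintro (h | h | h)
      · exact Or.inl h
      · subst h; exact absurd hd hsg
      · exact Or.inr h
    · tauto
  · intro v hv
    by_cases hvu : v = u
    · subst hvu
      refine Or.inr ⟨e, g1, hge.symm, by simp, by simp [hg1C], mem_D.1 heu, hu1, ?_, ?_, ?_⟩
      · intro d hd hdv
        rw [mem_insert, hmem d ((s_mem_con d).2 (Or.inr hdv))] at hd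
        rcases hd with h | h | h
        · exact Or.inl h
        · exact Or.inr h
        · subst h; exact absurd hdv hu2
      · rw [nH_congr hagu]; exact h0
      · rw [n1_congr hagu, hagu e heu, hagu g1 (mem_D.2 hu1)]; exact h2 g1 hu1 hg1
    · have hev : v ∉ G.ends e := by rw [he, Sym2.mem_iff]; tauto
      rcases hC.loc v hv with h | ⟨a, b, hab, ha, hb, hva, hvb, hall, hh, ht⟩
      · left
        intro d hd
        rcases mem_insert.1 hd with rfl | hd
        · exact hev
        · rw [← mem_con hv hvu]; exact h d hd
      · right
        rw [D_con hv hvu] at hh ht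
        rw [mem_con hv hvu] at hva hvb
        refine ⟨a, b, hab, by simp [ha], by simp [hb], hva, hvb, ?_, hh, ht⟩
        intro d hd hdv
        rcases mem_insert.1 hd with rfl | hd
        · exact absurd hdv hev
        · exact hall d hd ((mem_con hv hvu d).2 hdv)

theorem lift2 (hF : PB G s F) (hus : u ≠ s) (he : G.ends e = s(s, u)) (h0 : nH (D G u) F = 0)
    (hact : Act G s F X e) (h1 : ∀ g, u ∉ G.ends g → Act (con G s u) s F X' g → Act G s F X g)
    (h2 : ∀ g, u ∈ G.ends g → Act (con G s u) s F X' g → n1 (D G u) F = 0 ∨ F e = 2 ∨ F g = 2)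
    (h : Out2 (con G s u) s F X') : Out1 G s F X ∨ Out2 G s F X := by
  obtain ⟨F1, C, g1, g2, hP, hag, hg1, hg2, hC⟩ := h
  have heu : e ∈ D G u := mem_D.2 (by rw [he]; simp)
  have hes : s ∈ G.ends e := by rw [he]; simp
  have hagu : ∀ d ∈ D G u, F1 d = F d := fun d hd => hag d ((s_mem_con d).2 (Or.inr (mem_D.1 hd)))
  by_cases hu1 : u ∈ G.ends g1
  · by_cases hu2 : u ∈ G.ends g2
    · left
      have hnots : ∀ g, u ∈ G.ends g → Act (con G s u) s F X' g → s ∉ G.ends g := by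
        intro g hu1 hg1
        rcases Nl_con hg1.1 with ⟨w, hw1, hw2, hw3⟩ | ⟨w, hw1, hw2, hw3⟩
        · rw [hw3, Sym2.mem_iff] at hu1; tauto
        · rw [hw3, Sym2.mem_iff]; tauto
      have hs1 := hnots g1 hu1 hg1
      have hs2 := hnots g2 hu2 hg2
      have hg1C : g1 ∈ C := (hC.ats g1 ((s_mem_con g1).2 (Or.inr hu1))).2 (Or.inl rfl)
      have hg2C : g2 ∈ C := (hC.ats g2 ((s_mem_con g2).2 (Or.inr hu2))).2 (Or.inr rfl)
      have he1 : e ≠ g1 := by rintro rfl; exact hs1 hes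
      have he2 : e ≠ g2 := by rintro rfl; exact hs2 hes
      have hsC : ∀ d, s ∈ G.ends d → d ∉ C := by
        intro d hd hdC
        rcases (hC.ats d ((s_mem_con d).2 (Or.inl hd))).1 hdC with rfl | rfl
        · exact hs1 hd
        · exact hs2 hd
      have hags : ∀ d, s ∈ G.ends d → F1 d = F d := fun d hd => hag d ((s_mem_con d).2 (Or.inl hd))
      refine ⟨fun d => if d = e then 2 - F e else if d ∈ C then 1 else F1 d, e, ⟨?_, ?_, ?_⟩, hact,
        by simp, ?_⟩
      · intro d; split_ifs
        · omega
        · omega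
        · exact hP.le d
      · intro d hd
        rw [if_neg (hsC d hd), hags d hd]
        have := hF.ats d hd
        have := hF.ats e hes
        have := hF.le e
        split_ifs <;> omega
      · intro v hv
        by_cases hvu : v = u
        · subst hvu
          refine ok_lolli heu (mem_D.2 hu1) (mem_D.2 hu2) hC.ne he1 he2 hF.le (hF.ok v hv) h0
            (h2 g1 hu1 hg1) (h2 g2 hu2 hg2) ?_ (by simp) (by simp [he1.symm, hg1C])
            (by simp [he2.symm, hg2C])
          intro d hd hde hd1 hd2
          have : d ∉ C := by
            intro hdC
            rcases (hC.ats d ((s_mem_con d).2 (Or.inr (mem_D.1 hd)))).1 hdC with h | h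
            · exact hd1 h
            · exact hd2 h
          simp only [hde, this, if_false]
          exact hagu d hd
        · have hev : v ∉ G.ends e := by rw [he, Sym2.mem_iff]; tauto
          have hokv := hP.ok v hv
          rcases hC.loc v hv with h | ⟨a, b, hab, ha, hb, hva, hvb, hall, hh, ht⟩
          · have : ∀ d ∈ D G v, (if d = e then 2 - F e else if d ∈ C then 1 else F1 d) = F1 d := by
              intro d hd
              have hdv := mem_D.1 hd
              rw [if_neg (by rintro rfl; exact hev hdv), if_neg]
              intro hdC; exact h d hdC ((mem_con hv hvu d).2 hdv)
            rw [n1_congr this, nH_congr this, ← D_con hv hvu]; exact hokv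
          · rw [D_con hv hvu] at hh ht hokv
            rw [mem_con hv hvu] at hva hvb
            refine ok_half (mem_D.2 hva) (mem_D.2 hvb) hab hP.le hokv hh ht ?_ ?_ ?_
            · intro d hd hda hdb
              have hdv := mem_D.1 hd
              rw [if_neg (by rintro rfl; exact hev hdv), if_neg]
              intro hdC
              rcases hall d hdC ((mem_con hv hvu d).2 hdv) with h | h
              · exact hda h
              · exact hdb h
            · rw [if_neg (by rintro rfl; exact hev hva), if_pos ha]
            · rw [if_neg (by rintro rfl; exact hev hvb), if_pos hb]
      · intro d hd hde
        show (if d = e then 2 - F e else if d ∈ C then 1 else F1 d) = F d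
        rw [if_neg hde, if_neg (hsC d hd), hags d hd]
    · exact Or.inr (lift2_one hF hus he h0 hact h1 h2 hP hag hg1 hg2 hC hu1 hu2)
  · by_cases hu2 : u ∈ G.ends g2
    · exact Or.inr (lift2_one hF hus he h0 hact h1 h2 hP hag hg2 hg1 hC.symm hu2 hu1)
    · right
      refine ⟨F1, C, g1, g2, PB_lift hP ?_, fun d hd => hag d ((s_mem_con d).2 (Or.inl hd)),
        h1 g1 hu1 hg1, h1 g2 hu2 hg2, hC.ne, fun d hd => hC.ats d ((s_mem_con d).2 (Or.inl hd)), ?_⟩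
      · rw [n1_congr hagu, nH_congr hagu]; exact hF.ok u hus
      · intro v hv
        by_cases hvu : v = u
        · subst hvu
          left
          intro d hd hdv
          rcases (hC.ats d ((s_mem_con d).2 (Or.inr hdv))).1 hd with rfl | rfl
          · exact hu1 hdv
          · exact hu2 hdv
        · rcases hC.loc v hv with h | ⟨a, b, hab, ha, hb, hva, hvb, hall, hh, ht⟩
          · left
            intro d hd
            rw [← mem_con hv hvu]; exact h d hd
          · right
            rw [D_con hv hvu] at hh ht
            rw [mem_con hv hvu] at hva hvb
            exact ⟨a, b, hab, ha, hb, hva, hvb, fun d hd hdv => hall d hd ((mem_con hv hvu d).2 hdv), hh, ht⟩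

end lifts

/-- two parallel active edges. -/
theorem par {G : Multigraph V E} {s u : V} {F : E → ℕ} {X : Finset E} {e e' : E}
    (hF : PB G s F) (hus : u ≠ s) (he : G.ends e = s(s, u)) (he' : G.ends e' = s(s, u)) (hne : e ≠ e')
    (h0 : nH (D G u) F = 0) (ha : Act G s F X e) (ha' : Act G s F X e')
    (ht : n1 (D G u) F = 0 ∨ F e = 2 ∨ F e' = 2) : Out2 G s F X := by
  refine ⟨F, {e, e'}, e, e', hF, fun _ _ => rfl, ha, ha', hne, fun d _ => by simp, ?_⟩
  intro v hv
  by_cases hvu : v = u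
  · subst hvu
    exact Or.inr ⟨e, e', hne, by simp, by simp, by simp [he], by simp [he'], fun d hd _ => by simpa using hd,
      h0, ht⟩
  · left
    intro d hd
    have : G.ends d = s(s, u) := by
      simp at hd; rcases hd with rfl | rfl <;> assumption
    rw [this, Sym2.mem_iff]; tauto


inductive NW (G : Multigraph V E) (s : V) (B : Finset E) (x : V → ℝ) : E → V → ℝ → Prop
  | start {e : E} {v : V} : G.ends e = s(s, v) → v ≠ s → e ∉ B → NW G s B x e v (x v)
  | step {e e' : E} {v w : V} {c : ℝ} : NW G s B x e v c → v ≠ s → e' ≠ e → G.ends e' = s(v, w) →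
      e' ∉ B → NW G s B x e' w (c + x w)

def Cov (G : Multigraph V E) (s : V) (B : Finset E) (x : V → ℝ) : Prop :=
  ∀ e c, NW G s B x e s c → 1 ≤ c

theorem NW.nonneg {G : Multigraph V E} {s : V} {B : Finset E} {x : V → ℝ} (hx : ∀ v, 0 ≤ x v)
    {e v c} (h : NW G s B x e v c) : 0 ≤ c := by
  induction h with
  | start => exact hx _
  | step _ _ _ _ _ ih => exact add_nonneg ih (hx _)

noncomputable def tm (G : Multigraph V E) (s : V) (F : E → ℕ) (X : Finset E) (e : E) : ℤ :=
  if Nl G s e ∧ F e = 2 then (if e ∈ X then -1 else 1) else 0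

noncomputable def val (G : Multigraph V E) (s : V) (F : E → ℕ) (X : Finset E) : ℤ :=
  ∑ e, tm G s F X e

def Out0 (G : Multigraph V E) (s : V) (F : E → ℕ) (X : Finset E) : Prop :=
  ∃ x : V → ℝ, (∀ v, x v = 0 ∨ x v = 1 / 2 ∨ x v = 1) ∧ x s = 0 ∧ Cov G s X x ∧
    2 * ∑ v, x v ≤ (val G s F X : ℝ)

theorem cov_con {G : Multigraph V E} {s u : V} (hG : LS G s) (hus : u ≠ s) {B B' : Finset E} {r : E}
    {x : V → ℝ} (hx : ∀ v, 0 ≤ x v) (hxs : x s = 0) (hB : ∀ d ∈ B', d ∈ B ∨ d = r)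
    (hru : u ∈ G.ends r) (hr : ∀ d, G.ends d = s(s, u) → d ∉ B → d = r)
    (hc : Cov (con G s u) s B' x) : Cov G s B x := by
  have hnB : ∀ d, d ∉ B → d ≠ r → d ∉ B' := fun d h1 h2 h3 => (hB d h3).elim h1 h2
  have key : ∀ e v c, NW G s B x e v c → 1 ≤ c ∨
      (v ≠ s ∧ v ≠ u ∧ ∃ c' ≤ c, NW (con G s u) s B' x e v c') ∨ (v = u ∧ e = r) := by
    intro e v c h
    induction h with
    | @start e v he hv heB =>
      by_cases hvu : v = u
      · subst hvu; exact Or.inr (Or.inr ⟨rfl, hr _ he heB⟩)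
      · refine Or.inr (Or.inl ⟨hv, hvu, _, le_rfl, NW.start ?_ hv (hnB _ heB ?_)⟩)
        · rw [con_ends he, if_neg hus.symm, if_neg hvu]
        · rintro rfl; rw [he, Sym2.mem_iff] at hru; tauto
    | @step e e' v w c hW hv hne he' heB ih =>
      have h0 := hW.nonneg hx
      rcases ih with h | ⟨_, hvu, c', hc', hW'⟩ | ⟨hvu, her⟩
      · left; linarith [hx w]
      · by_cases hws : w = s
        · subst hws
          left
          have : NW (con G w u) w B' x e' w (c' + x w) := by
            refine NW.step hW' hv hne ?_ (hnB _ heB ?_)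
            · rw [con_ends he', if_neg hus.symm, if_neg hvu]
            · rintro rfl; rw [he', Sym2.mem_iff] at hru; tauto
          have := hc _ _ this
          linarith
        · by_cases hwu : w = u
          · subst hwu
            by_cases her : e' = r
            · exact Or.inr (Or.inr ⟨rfl, her⟩)
            · left
              have : NW (con G s w) s B' x e' s (c' + x s) := by
                refine NW.step hW' hv hne ?_ (hnB _ heB her)
                rw [con_ends he', if_neg hvu, if_pos rfl]
              have := hc _ _ this
              linarith [hx w]
          · refine Or.inr (Or.inl ⟨hws, hwu, c' + x w, by linarith, NW.step hW' hv hne ?_ (hnB _ heB ?_)⟩)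
            · rw [con_ends he', if_neg hvu, if_neg hwu]
            · rintro rfl; rw [he', Sym2.mem_iff] at hru; tauto
      · subst hvu; subst her
        have hwv : w ≠ v := by rintro rfl; exact hus (hG _ _ he')
        have hws : w ≠ s := by
          rintro rfl; exact hne (hr _ (by rw [he', Sym2.eq_swap]) heB)
        refine Or.inr (Or.inl ⟨hws, hwv, x w, by linarith, NW.start ?_ hws (hnB _ heB hne)⟩)
        rw [con_ends he', if_pos rfl, if_neg hwv]
  intro e c h
  rcases key e s c h with h | ⟨h, _⟩ | ⟨h, _⟩
  · exact h
  · exact absurd rfl h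
  · exact absurd h.symm hus

theorem cov_half {G : Multigraph V E} {s u : V} (hus : u ≠ s) {X : Finset E}
    {x : V → ℝ} (hx : ∀ v, 0 ≤ x v) (hxs : x s = 0)
    (hc : Cov (con G s u) s (X ∪ D G u) x) : Cov G s X (Function.update x u 1) := by
  have hx' : ∀ v, 0 ≤ Function.update x u 1 v := by
    intro v; by_cases h : v = u
    · subst h; simp
    · simp [h, hx]
  have hnB : ∀ d, d ∉ X → u ∉ G.ends d → d ∉ X ∪ D G u := fun d h1 h2 => by
    rw [mem_union, mem_D]; tauto
  have key : ∀ e v c, NW G s X (Function.update x u 1) e v c → 1 ≤ c ∨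
      (v ≠ s ∧ v ≠ u ∧ ∃ c' ≤ c, NW (con G s u) s (X ∪ D G u) x e v c') := by
    intro e v c h
    induction h with
    | @start e v he hv heB =>
      by_cases hvu : v = u
      · subst hvu; left; simp
      · refine Or.inr ⟨hv, hvu, x v, by simp [hvu], NW.start ?_ hv (hnB _ heB ?_)⟩
        · rw [con_ends he, if_neg hus.symm, if_neg hvu]
        · rw [he, Sym2.mem_iff]; tauto
    | @step e e' v w c hW hv hne he' heB ih =>
      have h0 := hW.nonneg hx'
      rcases ih with h | ⟨_, hvu, c', hc', hW'⟩
      · left; linarith [hx' w]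
      · by_cases hwu : w = u
        · subst hwu; left; simp; exact h0
        have hu' : u ∉ G.ends e' := by rw [he', Sym2.mem_iff]; tauto
        have : NW (con G s u) s (X ∪ D G u) x e' w (c' + x w) := by
          refine NW.step hW' hv hne ?_ (hnB _ heB hu')
          rw [con_ends he', if_neg hvu, if_neg hwu]
        rw [Function.update_of_ne hwu]
        by_cases hws : w = s
        · subst hws
          left
          have := hc _ _ this
          linarith
        · exact Or.inr ⟨hws, hwu, _, by linarith, this⟩
  intro e c h
  rcases key e s c h with h | ⟨h, _⟩
  · exact h
  · exact absurd rfl h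

theorem half_nonneg {x : V → ℝ} (h : ∀ v, x v = 0 ∨ x v = 1 / 2 ∨ x v = 1) (v : V) : 0 ≤ x v := by
  rcases h v with h | h | h <;> rw [h] <;> norm_num

/-- edges parallel to `s v` with value one -/
noncomputable def PE (G : Multigraph V E) (s : V) (F : E → ℕ) (v : V) : Finset E :=
  univ.filter (fun e => v ≠ s ∧ G.ends e = s(s, v) ∧ F e = 2)

theorem out0_base {G : Multigraph V E} {s : V} {F : E → ℕ} {X : Finset E} (hF : PB G s F)
    (h : ∀ e, ¬ Act G s F X e) : Out0 G s F X := by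
  have hcase : ∀ e, Nl G s e → e ∉ X → F e = 2 := by
    intro e he heX
    have h1 := h e
    have h2 : s ∈ G.ends e := by obtain ⟨w, _, hw⟩ := he; rw [hw]; simp
    have h3 := hF.ats e h2
    have h4 := hF.le e
    unfold Act at h1
    by_contra h5
    exact h1 ⟨he, Or.inl ⟨by omega, heX⟩⟩
  have hle2 : ∀ v, (PE G s F v).card ≤ 2 := by
    intro v
    by_cases hv : v = s
    · simp [PE, hv]
    · have : (PE G s F v).card ≤ n1 (D G v) F := by
        unfold n1
        apply card_le_card
        intro e he
        simp only [PE, mem_filter, mem_univ, true_and] at he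
        rw [mem_filter, mem_D, he.2.1]; exact ⟨by simp, he.2.2⟩
      have h2 := hF.ok v hv
      unfold Ok at h2; omega
  have hmem : ∀ {e v}, v ≠ s → G.ends e = s(s, v) → F e = 2 → e ∈ PE G s F v := by
    intro e v h1 h2 h3; simp [PE, h1, h2, h3]
  refine ⟨fun v => (1 / 2 : ℝ) * (PE G s F v).card, ?_, ?_, ?_, ?_⟩
  · intro v
    have := hle2 v
    dsimp only
    generalize (PE G s F v).card = k at this ⊢
    interval_cases k <;> norm_num
  · simp [PE]
  · have hxs : (1 / 2 : ℝ) * (PE G s F s).card = 0 := by simp [PE]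
    have hhalf : ∀ {e v}, v ≠ s → G.ends e = s(s, v) → F e = 2 → (1 / 2 : ℝ) ≤ (1 / 2) * (PE G s F v).card := by
      intro e v h1 h2 h3
      have : 1 ≤ (PE G s F v).card := card_pos.2 ⟨e, hmem h1 h2 h3⟩
      have : (1 : ℝ) ≤ (PE G s F v).card := by exact_mod_cast this
      linarith
    have hnn : ∀ v, 0 ≤ (1 / 2 : ℝ) * (PE G s F v).card := fun v => by positivity
    have key : ∀ e v c, NW G s X (fun v => (1 / 2 : ℝ) * (PE G s F v).card) e v c → (1 / 2 ≤ c) ∧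
        (v = s → 1 ≤ c) ∧ (v ≠ s → ∀ e', e' ≠ e → G.ends e' = s(s, v) → F e' = 2 → 1 ≤ c) := by
      intro e v c hW
      induction hW with
      | @start e v he hv heB =>
        have hFe := hcase e ⟨v, hv, he⟩ heB
        refine ⟨hhalf hv he hFe, fun h => absurd h hv, fun _ e' hne he' hFe' => ?_⟩
        have : 1 < (PE G s F v).card := one_lt_card.2 ⟨e', hmem hv he' hFe', e, hmem hv he hFe, hne⟩
        have : (2 : ℝ) ≤ (PE G s F v).card := by exact_mod_cast this
        linarith
      | @step e e' v w c hW hv hne he' heB ih =>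
        refine ⟨by linarith [hnn w, ih.1], ?_, ?_⟩
        · rintro rfl
          have he2 : G.ends e' = s(w, v) := by rw [he', Sym2.eq_swap]
          have := ih.2.2 hv e' hne he2 (hcase e' ⟨v, hv, he2⟩ heB)
          linarith
        · intro hw e'' _ he'' hF''
          linarith [hhalf hw he'' hF'', ih.1]
    intro e c hW
    exact (key e s c hW).2.1 rfl
  · have h1 : (∑ v, (PE G s F v).card : ℕ) ≤ val G s F X := by
      unfold PE val
      simp_rw [card_filter]
      rw [sum_comm]
      push_cast
      apply sum_le_sum
      intro e _
      unfold tm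
      by_cases hc : Nl G s e ∧ F e = 2
      · rw [if_pos hc, if_neg]
        · obtain ⟨⟨w, hw, hew⟩, hFe⟩ := hc
          rw [sum_eq_single w]
          · split_ifs <;> simp
          · intro v _ hvw
            rw [if_neg]
            rintro ⟨_, h2, _⟩
            rw [hew, Sym2.eq_iff] at h2
            rcases h2 with ⟨_, h⟩ | ⟨_, h⟩
            · exact hvw h.symm
            · exact hw h
          · simp
        · intro heX
          exact h e ⟨hc.1, Or.inr ⟨hc.2, heX⟩⟩
      · rw [if_neg hc]
        apply le_of_eq
        apply sum_eq_zero
        intro v _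
        rw [if_neg]
        rintro ⟨h1, h2, h3⟩
        exact hc ⟨⟨v, h1, h2⟩, h3⟩
    have h2 : ((∑ v, (PE G s F v).card : ℕ) : ℝ) ≤ (val G s F X : ℝ) := by exact_mod_cast h1
    rw [← mul_sum]
    push_cast at h2
    linarith

noncomputable def nlp (G : Multigraph V E) : ℕ := (univ.filter (fun e => ¬ (G.ends e).IsDiag)).card

theorem nlp_con {G : Multigraph V E} {s u : V} {e : E} (hus : u ≠ s) (he : G.ends e = s(s, u)) :
    nlp (con G s u) < nlp G := by
  unfold nlp
  apply card_lt_card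
  rw [ssubset_iff_of_subset]
  · refine ⟨e, ?_, ?_⟩
    · rw [mem_filter, he, Sym2.mk_isDiag_iff]; exact ⟨mem_univ _, hus.symm⟩
    · rw [mem_filter, con_ends he, if_neg hus.symm, if_pos rfl, Sym2.mk_isDiag_iff]; simp
  · intro d hd
    rw [mem_filter] at hd ⊢
    refine ⟨mem_univ _, fun hdiag => hd.2 ?_⟩
    obtain ⟨⟨a, b⟩, hab⟩ := Quot.exists_rep (G.ends d)
    have hab : G.ends d = s(a, b) := hab.symm
    rw [hab, Sym2.mk_isDiag_iff] at hdiag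
    rw [con_ends hab, hdiag, Sym2.mk_isDiag_iff]

theorem Nl.mem {G : Multigraph V E} {s : V} {e : E} (h : Nl G s e) : s ∈ G.ends e := by
  obtain ⟨w, _, hw⟩ := h; rw [hw]; simp

theorem Act_congr {G : Multigraph V E} {s : V} {F F1 : E → ℕ} {X : Finset E} {e : E}
    (h : ∀ e, s ∈ G.ends e → F1 e = F e) (ha : Act G s F1 X e) : Act G s F X e := by
  have := h e ha.1.mem
  unfold Act at ha ⊢
  rwa [this] at ha

theorem Out_congr {G : Multigraph V E} {s : V} {F F1 : E → ℕ} {X : Finset E}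
    (h : ∀ e, s ∈ G.ends e → F1 e = F e)
    (ho : Out0 G s F1 X ∨ Out1 G s F1 X ∨ Out2 G s F1 X) :
    Out0 G s F X ∨ Out1 G s F X ∨ Out2 G s F X := by
  rcases ho with h0 | h1 | h2
  · left
    obtain ⟨x, hx, hxs, hc, hv⟩ := h0
    refine ⟨x, hx, hxs, hc, ?_⟩
    have : val G s F1 X = val G s F X := by
      unfold val
      apply sum_congr rfl
      intro e _
      unfold tm
      by_cases hn : Nl G s e
      · rw [h e hn.mem]
      · simp [hn]
    rwa [this] at hv
  · right; left
    obtain ⟨F', g, hP, hg, hFg, hag⟩ := h1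
    exact ⟨F', g, hP, Act_congr h hg, by rw [hFg, h g hg.1.mem], fun e he hne => by rw [hag e he hne, h e he]⟩
  · right; right
    obtain ⟨F2, C, g1, g2, hP, hag, hg1, hg2, hC⟩ := h2
    exact ⟨F2, C, g1, g2, hP, fun e he => by rw [hag e he, h e he], Act_congr h hg1, Act_congr h hg2, hC⟩

/-- comparing values before and after contraction -/
theorem val_con {G : Multigraph V E} {s u : V} {F : E → ℕ} {X X' : Finset E} (hus : u ≠ s)
    (hX : ∀ d, u ∉ G.ends d → (d ∈ X' ↔ d ∈ X)) :
    val (con G s u) s F X' = val G s F X + ∑ d ∈ D G u, (tm (con G s u) s F X' d - tm G s F X d) := by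
  unfold val D
  rw [sum_filter, ← sum_add_distrib]
  apply sum_congr rfl
  intro d _
  split_ifs with hd
  · ring
  · rw [add_zero]
    unfold tm
    have : Nl (con G s u) s d ↔ Nl G s d := by
      constructor
      · intro h
        rcases Nl_con h with ⟨w, h1, _, h2⟩ | ⟨w, h1, _, h2⟩
        · exact ⟨w, h1, h2⟩
        · rw [h2] at hd; simp at hd
      · rintro ⟨w, h1, h2⟩
        refine ⟨w, h1, ?_⟩
        have : w ≠ u := by rintro rfl; rw [h2] at hd; simp at hd
        rw [con_ends h2, if_neg hus.symm, if_neg this]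
    simp only [this, hX d hd]

/-- `tm` at an edge incident to `u`. -/
theorem tm_u {G : Multigraph V E} {s u : V} {F : E → ℕ} {X X' : Finset E} {d : E} (hG : LS G s) (hus : u ≠ s)
    (hd : u ∈ G.ends d) (hF : F d = 2) (hX : d ∈ X') (hXs : G.ends d = s(s, u) → d ∉ X) :
    tm (con G s u) s F X' d - tm G s F X d = -1 := by
  obtain ⟨w, hw⟩ := Sym2.mem_iff_exists.1 hd
  have hwu : w ≠ u := by rintro rfl; exact hus (hG _ _ hw)
  unfold tm
  by_cases hws : w = s
  · subst hws
    have h1 : Nl G w d := ⟨u, hus, by rw [hw, Sym2.eq_swap]⟩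
    have h2 : ¬ Nl (con G w u) w d := by
      rintro ⟨v, hv, h⟩
      rw [con_ends hw, if_pos rfl, if_neg hwu, Sym2.eq_iff] at h
      rcases h with ⟨_, h⟩ | ⟨h, _⟩ <;> exact hv h.symm
    rw [if_neg (by tauto), if_pos ⟨h1, hF⟩, if_neg (hXs (by rw [hw, Sym2.eq_swap]))]; norm_num
  · have h1 : ¬ Nl G s d := by
      rintro ⟨v, hv, h⟩
      rw [hw, Sym2.eq_iff] at h
      tauto
    have h2 : Nl (con G s u) s d := ⟨w, hws, by rw [con_ends hw, if_pos rfl, if_neg hwu]⟩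
    rw [if_pos ⟨h2, hF⟩, if_pos hX, if_neg (fun h => h1 h.1)]; norm_num

theorem tm_zero {G : Multigraph V E} {s : V} {F : E → ℕ} {X : Finset E} {d : E} (hF : F d ≠ 2) :
    tm G s F X d = 0 := by
  unfold tm; rw [if_neg (by tauto)]

theorem act_con {G : Multigraph V E} {s u : V} {F : E → ℕ} {X X' : Finset E} {g : E}
    (hX : g ∈ X' ↔ g ∈ X) (hg : u ∉ G.ends g) (h : Act (con G s u) s F X' g) : Act G s F X g := by
  refine ⟨?_, ?_⟩
  · rcases Nl_con h.1 with ⟨w, h1, _, h2⟩ | ⟨w, h1, _, h2⟩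
    · exact ⟨w, h1, h2⟩
    · rw [h2] at hg; simp at hg
  · rw [← hX]; exact h.2

theorem main_lemma (n : ℕ) : ∀ (G : Multigraph V E) (s : V) (F : E → ℕ) (X : Finset E),
    nlp G + halves F = n → LS G s → PB G s F → (∀ e ∈ X, s ∈ G.ends e) →
    Out0 G s F X ∨ Out1 G s F X ∨ Out2 G s F X := by
  induction n using Nat.strong_induction_on with
  | _ n IH =>
  intro G s F X hn hG hF hX
  by_cases hex : ∃ e, Act G s F X e
  swap
  · push Not at hex
    exact Or.inl (out0_base hF hex)
  obtain ⟨e, hact⟩ := hex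
  obtain ⟨u, hus, he⟩ := hact.1
  have heu : e ∈ D G u := mem_D.2 (by rw [he]; simp)
  have hes : s ∈ G.ends e := by rw [he]; simp
  by_cases h0 : nH (D G u) F = 0
  swap
  · -- half-integral vertex : round the cycle
    obtain ⟨F1, hle, hag, hlt, hok, hH, hn1⟩ := round G s u hG hus F hF h0
    have hags : ∀ e, s ∈ G.ends e → F1 e = F e := fun d hd => hag d (hF.ats d hd)
    by_cases hodd : n1 (D G u) F1 = 1
    · right; left
      refine ⟨Function.update F1 e (2 - F e), e, ⟨?_, ?_, ?_⟩, hact, by simp, ?_⟩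
      · intro d; by_cases hd : d = e
        · subst hd; simp
        · simp [hd, hle]
      · intro d hd; by_cases hde : d = e
        · subst hde
          have := hF.ats d hd
          have := hF.le d
          simp; omega
        · rw [Function.update_of_ne hde, hags d hd]; exact hF.ats d hd
      · intro v hv
        by_cases hvu : v = u
        · subst hvu
          rw [n1_erase heu] at hodd ⊢
          rw [nH_erase heu] at hH ⊢
          rw [n1_upd_not _ (by simp), nH_upd_not _ (by simp)]
          rw [hags e hes] at hodd hH
          have := hF.ats e hes
          have := hF.le e
          simp only [Function.update_self]
          unfold Ok
          generalize F e = k at *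
          interval_cases k <;> simp at * <;> omega
        · have hev : e ∉ D G v := by rw [mem_D, he, Sym2.mem_iff]; tauto
          rw [n1_upd_not _ hev, nH_upd_not _ hev]
          exact hok v hv hvu
      · intro d hd hde
        rw [Function.update_of_ne hde]; exact hags d hd
    · apply Out_congr hags
      refine IH (nlp G + halves F1) (by omega) G s F1 X rfl hG ⟨hle, ?_, ?_⟩ hX
      · intro d hd; rw [hags d hd]; exact hF.ats d hd
      · intro v hv
        by_cases hvu : v = u
        · subst hvu; unfold Ok; omega
        · exact hok v hv hvu
  have hcon := IH (nlp (con G s u) + halves F) (by have := nlp_con hus he; omega) (con G s u) s F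
  have hLS := LS_con hG hus
  have hPB := PB_con hF hus h0
  by_cases hFe : F e = 0
  · have heX : e ∉ X := by
      rcases hact.2 with h | h
      · exact h.2
      · omega
    by_cases hn0 : n1 (D G u) F = 0
    · -- case (a)
      by_cases hpar : ∃ e', e' ≠ e ∧ G.ends e' = s(s, u) ∧ e' ∉ X
      · obtain ⟨e', hne, he', heX'⟩ := hpar
        right; right
        have hu' : e' ∈ D G u := mem_D.2 (by rw [he']; simp)
        have h1 := nH_zero.1 h0 e' hu'
        have h2 := n1_zero.1 hn0 e' hu'
        have h3 := hF.le e'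
        exact par hF hus he he' hne.symm h0 hact ⟨⟨u, hus, he'⟩, Or.inl ⟨by omega, heX'⟩⟩ (Or.inl hn0)
      · push Not at hpar
        have hh1 : ∀ g, u ∉ G.ends g → Act (con G s u) s F X g → Act G s F X g :=
          fun g hg h => act_con Iff.rfl hg h
        have hh2 : ∀ g, u ∈ G.ends g → Act (con G s u) s F X g → n1 (D G u) F = 0 ∨ F e = 2 ∨ F g = 2 :=
          fun _ _ _ => Or.inl hn0
        rcases hcon X rfl hLS hPB (fun d hd => (s_mem_con d).2 (Or.inl (hX d hd))) with h | h | h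
        · left
          obtain ⟨x, hx, hxs, hc, hv⟩ := h
          refine ⟨x, hx, hxs, cov_con hG hus (half_nonneg hx) hxs (r := e) (fun d hd => Or.inl hd) (mem_D.1 heu)
            ?_ hc, ?_⟩
          · intro d hd hdX
            by_contra hde
            exact hdX (hpar d hde hd)
          · have h1 : ∑ d ∈ D G u, (tm (con G s u) s F X d - tm G s F X d) = 0 := by
              apply sum_eq_zero
              intro d hd
              have := n1_zero.1 hn0 d hd
              rw [tm_zero this, tm_zero this, sub_zero]
            rw [val_con hus (fun d _ => Iff.rfl), h1, add_zero] at hv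
            exact hv
        · right; left; exact lift1 hF hus he h0 hact hh1 hh2 h
        · right; exact lift2 hF hus he h0 hact hh1 hh2 h
    · -- case (b)
      have hn2 : n1 (D G u) F = 2 := by
        have := hF.ok u hus
        unfold Ok at this; omega
      by_cases hpar : ∃ e', G.ends e' = s(s, u) ∧ e' ∈ X ∧ F e' = 2
      · obtain ⟨e', he', heX', hF'⟩ := hpar
        right; right
        exact par hF hus he he' (by rintro rfl; omega) h0 hact ⟨⟨u, hus, he'⟩, Or.inr ⟨hF', heX'⟩⟩
          (Or.inr (Or.inr hF'))
      · push Not at hpar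
        have hmX : ∀ d, u ∉ G.ends d → (d ∈ X ∪ D G u ↔ d ∈ X) := by
          intro d hd; rw [mem_union, mem_D]; tauto
        have hh1 : ∀ g, u ∉ G.ends g → Act (con G s u) s F (X ∪ D G u) g → Act G s F X g :=
          fun g hg h => act_con (hmX g hg) hg h
        have hh2 : ∀ g, u ∈ G.ends g → Act (con G s u) s F (X ∪ D G u) g →
            n1 (D G u) F = 0 ∨ F e = 2 ∨ F g = 2 := by
          intro g hg h
          rcases h.2 with h | h
          · exact absurd (mem_union_right X (mem_D.2 hg)) h.2
          · exact Or.inr (Or.inr h.1)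
        have hXc : ∀ d ∈ X ∪ D G u, s ∈ (con G s u).ends d := by
          intro d hd
          rw [mem_union, mem_D] at hd
          rw [s_mem_con]
          rcases hd with h | h
          · exact Or.inl (hX d h)
          · exact Or.inr h
        rcases hcon (X ∪ D G u) rfl hLS hPB hXc with h | h | h
        · left
          obtain ⟨x, hx, hxs, hc, hv⟩ := h
          refine ⟨Function.update x u 1, ?_, by rw [Function.update_of_ne hus.symm, hxs],
            cov_half hus (half_nonneg hx) hxs hc, ?_⟩
          · intro v; by_cases hvu : v = u
            · subst hvu; simp
            · rw [Function.update_of_ne hvu]; exact hx v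
          · have h1 : ∑ d ∈ D G u, (tm (con G s u) s F (X ∪ D G u) d - tm G s F X d) = -2 := by
              have : ∀ d ∈ D G u, (tm (con G s u) s F (X ∪ D G u) d - tm G s F X d) =
                  if F d = 2 then -1 else 0 := by
                intro d hd
                split_ifs with h
                · exact tm_u hG hus (mem_D.1 hd) h (mem_union_right _ hd) (fun h1 h2 => hpar d h1 h2 h)
                · rw [tm_zero h, tm_zero h, sub_zero]
              rw [sum_congr rfl this, ← sum_filter, sum_const]
              unfold n1 at hn2
              rw [hn2]; simp
            rw [val_con hus hmX, h1] at hv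
            push_cast at hv
            have h2 : ∑ v, Function.update x u 1 v ≤ ∑ v, x v + 1 := by
              rw [sum_update_of_mem (mem_univ u), ← add_sum_erase univ x (mem_univ u)]
              have := half_nonneg hx u
              rw [sdiff_singleton_eq_erase]
              linarith
            linarith
        · right; left; exact lift1 hF hus he h0 hact hh1 hh2 h
        · right; exact lift2 hF hus he h0 hact hh1 hh2 h
  · -- case (d)
    have hFe2 : F e = 2 ∧ e ∈ X := by
      rcases hact.2 with h | h
      · exact absurd h.1 hFe
      · exact h
    obtain ⟨hFe2, heX⟩ := hFe2
    have hn2 : n1 (D G u) F = 2 := by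
      have h1 := hF.ok u hus
      have h2 : n1 (D G u) F ≠ 0 := fun h => n1_zero.1 h e heu hFe2
      unfold Ok at h1; omega
    have hp1 : (((D G u).filter (fun d => F d = 2)).erase e).card = 1 := by
      rw [card_erase_of_mem (mem_filter.2 ⟨heu, hFe2⟩)]
      unfold n1 at hn2; omega
    obtain ⟨p, hp⟩ := card_eq_one.1 hp1
    have hp' : ∀ d, (d ≠ e ∧ u ∈ G.ends d ∧ F d = 2) ↔ d = p := by
      intro d
      have := Finset.ext_iff.1 hp d
      rw [mem_erase, mem_filter, mem_D, mem_singleton] at this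
      exact this
    obtain ⟨hpe, hpu, hFp⟩ := (hp' p).2 rfl
    by_cases hpar : ∃ e', e' ≠ e ∧ G.ends e' = s(s, u) ∧ Act G s F X e'
    · obtain ⟨e', hne, he', ha'⟩ := hpar
      right; right
      exact par hF hus he he' hne.symm h0 hact ha' (Or.inr (Or.inl hFe2))
    · push Not at hpar
      have hmX : ∀ d, u ∉ G.ends d → (d ∈ insert p X ↔ d ∈ X) := by
        intro d hd
        rw [mem_insert]
        constructor
        · rintro (rfl | h)
          · exact absurd hpu hd
          · exact h
        · exact Or.inr
      have hh1 : ∀ g, u ∉ G.ends g → Act (con G s u) s F (insert p X) g → Act G s F X g :=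
        fun g hg h => act_con (hmX g hg) hg h
      have hh2 : ∀ g, u ∈ G.ends g → Act (con G s u) s F (insert p X) g →
          n1 (D G u) F = 0 ∨ F e = 2 ∨ F g = 2 := fun _ _ _ => Or.inr (Or.inl hFe2)
      have hXc : ∀ d ∈ insert p X, s ∈ (con G s u).ends d := by
        intro d hd
        rw [mem_insert] at hd
        rw [s_mem_con]
        rcases hd with rfl | h
        · exact Or.inr hpu
        · exact Or.inl (hX d h)
      rcases hcon (insert p X) rfl hLS hPB hXc with h | h | h
      · left
        obtain ⟨x, hx, hxs, hc, hv⟩ := h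
        refine ⟨x, hx, hxs, cov_con hG hus (half_nonneg hx) hxs (r := p) (fun d hd => ?_) hpu ?_ hc, ?_⟩
        · rw [mem_insert] at hd; tauto
        · intro d hd hdX
          have hdu : u ∈ G.ends d := by rw [hd]; simp
          have hde : d ≠ e := by rintro rfl; exact hdX heX
          apply (hp' d).1
          refine ⟨hde, hdu, ?_⟩
          have h1 := hF.le d
          have h2 := nH_zero.1 h0 d (mem_D.2 hdu)
          by_contra h3
          exact hpar d hde hd ⟨⟨u, hus, hd⟩, Or.inl ⟨by omega, hdX⟩⟩
        · have h1 : ∑ d ∈ D G u, (tm (con G s u) s F (insert p X) d - tm G s F X d) = 0 := by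
            have : ∀ d ∈ D G u, (tm (con G s u) s F (insert p X) d - tm G s F X d) =
                (if d = e then 1 else 0) + (if d = p then -1 else 0) := by
              intro d hd
              by_cases hde : d = e
              · rw [if_pos hde, if_neg (by rw [hde]; exact hpe.symm), hde]
                have hn : ¬ Nl (con G s u) s e := by
                  rintro ⟨v, hv, h⟩
                  rw [con_ends he, if_neg hus.symm, if_pos rfl, Sym2.eq_iff] at h
                  rcases h with ⟨_, h⟩ | ⟨h, _⟩ <;> exact hv h.symm
                unfold tm
                rw [if_neg (by tauto), if_pos ⟨hact.1, hFe2⟩, if_pos heX]; norm_num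
              · by_cases hdp : d = p
                · rw [if_neg hde, if_pos hdp, zero_add, hdp]
                  apply tm_u hG hus hpu hFp (mem_insert_self _ _)
                  intro h1 h2
                  exact hpar p hpe h1 ⟨⟨u, hus, h1⟩, Or.inr ⟨hFp, h2⟩⟩
                · have h2 : F d ≠ 2 := fun h => hdp ((hp' d).1 ⟨hde, mem_D.1 hd, h⟩)
                  rw [tm_zero h2, tm_zero h2, if_neg hde, if_neg hdp]; norm_num
            rw [sum_congr rfl this, sum_add_distrib, sum_ite_eq', sum_ite_eq', if_pos heu,
              if_pos (mem_D.2 hpu)]; norm_num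
          rw [val_con hus hmX, h1, add_zero] at hv
          exact hv
      · right; left; exact lift1 hF hus he h0 hact hh1 hh2 h
      · right; exact lift2 hF hus he h0 hact hh1 hh2 h

theorem cover_of_cov {G : Multigraph V E} {s : V} (hl : G.LoopFree) {x : V → ℝ} (hx : ∀ v, 0 ≤ x v)
    (hxs : x s = 0) (h : Cov G s ∅ x) : G.IsSCycleCover s x := by
  refine ⟨hx, hxs, ?_⟩
  intro W hW
  obtain ⟨hs, hf, hin, hU, _⟩ := hW
  have hs' : W.verts 0 = s := hs
  have hf' : W.verts (Fin.last W.len) = s := hf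
  let y : ℕ → ℝ := fun i => if h : i < W.len + 1 then x (W.verts ⟨i, h⟩) else 0
  have hy : ∀ i (h : i < W.len + 1), x (W.verts ⟨i, h⟩) = y i := by
    intro i h; simp only [y]; rw [dif_pos h]
  have key : ∀ k (hk : k < W.len), NW G s ∅ x (W.edges ⟨k, hk⟩) (W.verts ⟨k + 1, by omega⟩)
      (∑ i ∈ range (k + 1), y (i + 1)) := by
    intro k
    induction k with
    | zero =>
      intro hk
      have hv := W.valid ⟨0, hk⟩
      have h0 : W.verts (Fin.castSucc ⟨0, hk⟩) = s := hs'
      rw [h0] at hv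
      have h1 : W.verts (Fin.succ ⟨0, hk⟩) ≠ s := by
        intro h2; rw [h2] at hv
        exact hl _ (by rw [hv]; simp)
      have : ∑ i ∈ range (0 + 1), y (i + 1) = x (W.verts (Fin.succ ⟨0, hk⟩)) := by
        simp only [zero_add, range_one, sum_singleton]
        exact (hy 1 (by omega)).symm
      rw [this]
      exact NW.start hv h1 (by simp)
    | succ k ih =>
      intro hk
      have := ih (by omega)
      rw [sum_range_succ, ← hy (k + 1 + 1) (by omega)]
      refine NW.step this ?_ ?_ (W.valid ⟨k + 1, hk⟩) (by simp)
      · apply hin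
        · intro h; have := congrArg Fin.val h; simp at this
        · intro h; have := congrArg Fin.val h; simp at this; omega
      · exact (hU ⟨k, by omega⟩ ⟨k + 1, hk⟩ rfl).symm
  have hlp := W.len_pos
  have h1 := key (W.len - 1) (by omega)
  have h2 : W.verts ⟨W.len - 1 + 1, by omega⟩ = s := by
    rw [← hf']; congr 1; apply Fin.ext; simp; omega
  rw [h2] at h1
  have h3 := h _ _ h1
  have h4 : ∑ i, x (W.verts i) = ∑ i ∈ range (W.len + 1), y i := by
    rw [← Fin.sum_univ_eq_sum_range]
    apply sum_congr rfl
    intro i _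
    exact hy i.1 i.2
  rw [h4, sum_range_succ']
  have h5 : y 0 = 0 := by rw [← hy 0 (by omega)]; rw [← hxs, ← hs']; rfl
  rw [h5, add_zero]
  have h6 : W.len - 1 + 1 = W.len := by omega
  rwa [h6] at h3

inductive LW (G : Multigraph V E) (s : V) : List (E × V) → Prop
  | start {e : E} {v : V} : G.ends e = s(s, v) → v ≠ s → LW G s [(e, v)]
  | step {e e' : E} {v w : V} {l : List (E × V)} : LW G s ((e, v) :: l) → v ≠ s → e' ≠ e →
      G.ends e' = s(v, w) → LW G s ((e', w) :: (e, v) :: l)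

theorem LW.suffix {G : Multigraph V E} {s : V} {M : List (E × V)} (h : LW G s M) :
    ∀ d ∈ M, ∃ l, LW G s (d :: l) ∧ (d :: l) <:+ M := by
  induction h with
  | start h1 h2 =>
    intro d hd
    simp at hd; subst hd
    exact ⟨[], LW.start h1 h2, List.suffix_refl _⟩
  | @step e e' v w l hl hv hne he ih =>
    intro d hd
    rcases List.mem_cons.1 hd with rfl | hd
    · exact ⟨_, LW.step hl hv hne he, List.suffix_refl _⟩
    · obtain ⟨l', h1, h2⟩ := ih d hd
      exact ⟨l', h1, h2.trans (List.suffix_cons _ _)⟩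

theorem LW.prop {G : Multigraph V E} {s : V} {M : List (E × V)} (h : LW G s M) :
    0 < M.length ∧ (∀ i (h : i + 1 < M.length), M[i + 1].2 ≠ s ∧ M[i].1 ≠ M[i + 1].1 ∧
      G.ends M[i].1 = s(M[i + 1].2, M[i].2)) ∧
      ∀ i (h : i < M.length), i + 1 = M.length → G.ends M[i].1 = s(s, M[i].2) := by
  induction h with
  | start h1 h2 =>
    refine ⟨by simp, ?_, ?_⟩
    · intro i h; simp at h
    · intro i h h3
      simp at h; subst h; exact h1
  | @step e e' v w l hl hv hne he ih =>
    refine ⟨by simp, ?_, ?_⟩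
    · intro i h
      cases i with
      | zero => exact ⟨hv, hne, he⟩
      | succ i => exact ih.2.1 i (by simpa using h)
    · intro i h h3
      cases i with
      | zero => simp at h3
      | succ i => exact ih.2.2 i (by simpa using h) (by simpa using h3)

theorem NW.toLW {G : Multigraph V E} {s : V} {x : V → ℝ} (hx : ∀ v, 0 ≤ x v) {e v c}
    (h : NW G s ∅ x e v c) : ∃ l, LW G s ((e, v) :: l) ∧ ((e, v) :: l).Nodup ∧
      (((e, v) :: l).map (fun d => x d.2)).sum ≤ c := by
  induction h with
  | start h1 h2 => exact ⟨[], LW.start h1 h2, by simp, by simp⟩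
  | @step e e' v w c hW hv hne he' heB ih =>
    obtain ⟨l, h1, h2, h3⟩ := ih
    by_cases hm : (e', w) ∈ (e, v) :: l
    · obtain ⟨l', h4, h5⟩ := h1.suffix _ hm
      refine ⟨l', h4, h2.sublist h5.sublist, ?_⟩
      have h6 : (((e', w) :: l').map (fun d => x d.2)).sum ≤ (((e, v) :: l).map (fun d => x d.2)).sum := by
        apply List.Sublist.sum_le_sum (h5.sublist.map _)
        intro a ha
        obtain ⟨d, _, rfl⟩ := List.mem_map.1 ha
        exact hx _
      linarith [hx w]
    · refine ⟨_, LW.step h1 hv hne he', List.nodup_cons.2 ⟨hm, h2⟩, ?_⟩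
      rw [List.map_cons, List.sum_cons]
      dsimp only
      linarith

theorem cov_of_cover {G : Multigraph V E} {s : V} {x : V → ℝ} (h : G.IsSCycleCover s x) : Cov G s ∅ x := by
  obtain ⟨hx, hxs, hc⟩ := h
  intro e c hW
  obtain ⟨l, h1, h2, h3⟩ := hW.toLW hx
  obtain ⟨hpos, hp1, hp2⟩ := h1.prop
  have hM0 : ∀ h, (((e, s) :: l)[0]'h).2 = s := fun h => rfl
  generalize (e, s) :: l = M at *
  let vt : ℕ → V := fun i => if h : i < M.length then M[i].2 else s
  have hvt : ∀ i (h : i < M.length), vt i = M[i].2 := fun i h => by simp only [vt]; rw [dif_pos h]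
  have hvl : vt M.length = s := by simp [vt]
  let W : G.Walk := ⟨M.length, hpos, fun i => vt i, fun i => M[i.1].1, by
    intro i
    simp only [Fin.val_castSucc, Fin.val_succ]
    rw [hvt _ i.2]
    by_cases hi : i.1 + 1 < M.length
    · rw [hvt _ hi, (hp1 i.1 hi).2.2, Sym2.eq_swap]
    · have : i.1 + 1 = M.length := by omega
      rw [hp2 i.1 i.2 this, this, hvl, Sym2.eq_swap]⟩
  have hWs : W.IsSCycle s := by
    refine ⟨?_, ?_, ?_, ?_, ?_⟩
    · show vt 0 = s
      rw [hvt 0 hpos, hM0]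
    · show vt M.length = s
      exact hvl
    · rintro ⟨i, hi⟩ h0 hl
      have hi' : i < M.length + 1 := hi
      have h0' : i ≠ 0 := by rintro rfl; exact h0 rfl
      have hl' : i ≠ M.length := by rintro rfl; exact hl rfl
      show vt i ≠ s
      obtain ⟨j, rfl⟩ : ∃ j, i = j + 1 := ⟨i - 1, by omega⟩
      rw [hvt (j + 1) (by omega)]
      exact (hp1 j (by omega)).1
    · rintro ⟨i, hi⟩ ⟨j, hj⟩ hij
      have hj' : j < M.length := hj
      simp only at hij; subst hij
      exact (hp1 i hj').2.1
    · intro d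
      obtain ⟨⟨a, b⟩, hab⟩ := Quot.exists_rep (G.ends d)
      have hab : G.ends d = s(a, b) := hab.symm
      have hcard : Nat.card Bool = 2 := by simp
      rw [← hcard]
      have hmem : ∀ i (hi : i < M.length), M[i].1 = d → M[i].2 = a ∨ M[i].2 = b := by
        intro i hi hd
        have : M[i].2 ∈ G.ends M[i].1 := by
          by_cases hi2 : i + 1 < M.length
          · rw [(hp1 i hi2).2.2]; simp
          · rw [hp2 i hi (by omega)]; simp
        rw [hd, hab, Sym2.mem_iff] at this
        exact this
      apply Nat.card_le_card_of_injective
        (fun i : {i : Fin W.len // W.edges i = d} => decide (vt i.1.1 = a))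
      rintro ⟨⟨i, hi⟩, hie⟩ ⟨⟨j, hj⟩, hje⟩ hij
      have hi' : i < M.length := hi
      have hj' : j < M.length := hj
      have hie' : M[i].1 = d := hie
      have hje' : M[j].1 = d := hje
      simp only [decide_eq_decide] at hij
      rw [hvt i hi', hvt j hj'] at hij
      have h4 := hmem i hi' hie'
      have h5 := hmem j hj' hje'
      have h6 : M[i].2 = M[j].2 := by
        by_cases h7 : M[i].2 = a
        · rw [h7, hij.1 h7]
        · have h8 : M[j].2 ≠ a := fun h => h7 (hij.2 h)
          rw [h4.resolve_left h7, h5.resolve_left h8]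
      have h7 : M[i] = M[j] := Prod.ext (by rw [hie', hje']) h6
      have h8 : i = j := (h2.getElem_inj_iff).1 h7
      subst h8; rfl
  have := hc W hWs
  have hsum : ∑ i, x (W.verts i) = (M.map (fun d => x d.2)).sum := by
    show ∑ i : Fin (M.length + 1), x (vt i) = _
    rw [Fin.sum_univ_castSucc]
    simp only [Fin.val_castSucc, Fin.val_last]
    rw [hvl, hxs, add_zero, ← Fin.sum_univ_fun_getElem]
    apply sum_congr rfl
    intro i _
    rw [hvt _ i.2]
  linarith

theorem sum_split {S : Finset E} {F : E → ℕ} (hF : ∀ e, F e ≤ 2) (p : E → ℝ) :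
    ∑ e ∈ S, (F e : ℝ) * p e = 2 * ∑ e ∈ S.filter (fun e => F e = 2), p e +
      ∑ e ∈ S.filter (fun e => F e = 1), p e := by
  rw [sum_filter, sum_filter, mul_sum, ← sum_add_distrib]
  apply sum_congr rfl
  intro e _
  have := hF e
  generalize F e = k at *
  interval_cases k <;> simp

theorem local_ineq {S : Finset E} {F : E → ℕ} (hF : ∀ e, F e ≤ 2) (hok : Ok (n1 S F) (nH S F))
    {p q : E → ℝ} (h : ∀ e ∈ S, ∀ e' ∈ S, e ≠ e' → p e ≤ q e') :
    ∑ e ∈ S, (F e : ℝ) * p e ≤ ∑ e ∈ S, (F e : ℝ) * q e := by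
  rw [sum_split hF, sum_split hF]
  have h2 : ∀ {T : Finset E}, T ⊆ S → T.card = 2 → ∑ e ∈ T, p e ≤ ∑ e ∈ T, q e := by
    intro T hT hc
    obtain ⟨a, b, hab, rfl⟩ := card_eq_two.1 hc
    rw [sum_pair hab, sum_pair hab]
    have ha := hT (mem_insert_self a {b})
    have hb : b ∈ S := hT (by simp)
    linarith [h a ha b hb hab, h b hb a ha hab.symm]
  have e1 : ∀ {T : Finset E}, T.card = 0 → T = ∅ := fun h => card_eq_zero.1 h
  unfold n1 nH at hok
  rcases hok with ⟨h3, h4⟩ | ⟨h3, h4⟩ | ⟨h3, h4⟩ | ⟨h3, h4⟩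
  · rw [e1 h3, e1 h4]; simp
  · rw [e1 h4]; have := h2 (filter_subset _ _) h3
    simp only [sum_empty]; linarith
  · rw [e1 h3]; have := h2 (filter_subset _ _) h4
    simp only [sum_empty]; linarith
  · obtain ⟨t, ht⟩ := card_eq_one.1 h3
    obtain ⟨a, b, hab, hT⟩ := card_eq_two.1 h4
    have ht' : t ∈ S.filter (fun e => F e = 2) := by rw [ht]; simp
    have ha' : a ∈ S.filter (fun e => F e = 1) := by rw [hT]; simp
    have hb' : b ∈ S.filter (fun e => F e = 1) := by rw [hT]; simp
    rw [ht, hT, sum_singleton, sum_singleton, sum_pair hab, sum_pair hab]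
    rw [mem_filter] at ht' ha' hb'
    have hta : t ≠ a := by rintro rfl; omega
    have htb : t ≠ b := by rintro rfl; omega
    linarith [h t ht'.1 a ha'.1 hta, h t ht'.1 b hb'.1 htb, h a ha'.1 t ht'.1 hta.symm, h b hb'.1 t ht'.1 htb.symm]

theorem local_le {S : Finset E} {F : E → ℕ} (hF : ∀ e, F e ≤ 2) (hok : Ok (n1 S F) (nH S F)) :
    ∑ e ∈ S, (F e : ℝ) ≤ 4 := by
  have := sum_split (S := S) hF (fun _ => (1 : ℝ))
  simp only [mul_one, sum_const, nsmul_eq_mul] at this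
  rw [this]
  unfold n1 nH at hok
  rcases hok with ⟨h3, h4⟩ | ⟨h3, h4⟩ | ⟨h3, h4⟩ | ⟨h3, h4⟩ <;> rw [h3, h4] <;> norm_num

noncomputable def pot (G : Multigraph V E) (s : V) (x : V → ℝ) (e : E) (v : V) : ℝ :=
  sInf {c | c = 1 ∨ NW G s ∅ x e v c}

theorem pot_bdd {G : Multigraph V E} {s : V} {x : V → ℝ} (hx : ∀ v, 0 ≤ x v) (e : E) (v : V) :
    BddBelow {c | c = 1 ∨ NW G s ∅ x e v c} := by
  refine ⟨0, ?_⟩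
  rintro c (rfl | h)
  · norm_num
  · exact h.nonneg hx

theorem pot_step {G : Multigraph V E} {s : V} {x : V → ℝ} (hx : ∀ v, 0 ≤ x v) {e e' : E} {v w : V}
    (hv : v ≠ s) (hne : e' ≠ e) (he' : G.ends e' = s(v, w)) :
    pot G s x e' w - x w ≤ pot G s x e v := by
  unfold pot
  refine le_csInf (⟨1, Or.inl rfl⟩ : Set.Nonempty {c | c = 1 ∨ NW G s ∅ x e v c}) ?_
  rintro c (rfl | h)
  · have := csInf_le (pot_bdd (G := G) (s := s) hx e' w) (Or.inl rfl)
    linarith [hx w]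
  · have := csInf_le (pot_bdd (G := G) (s := s) hx e' w) (Or.inr (NW.step h hv hne he' (by simp)))
    linarith

theorem pot_s {G : Multigraph V E} {s : V} {x : V → ℝ} (hc : Cov G s ∅ x) (e : E) :
    1 ≤ pot G s x e s := by
  unfold pot
  refine le_csInf (⟨1, Or.inl rfl⟩ : Set.Nonempty {c | c = 1 ∨ NW G s ∅ x e s c}) ?_
  rintro c (rfl | h)
  · exact le_rfl
  · exact hc _ _ h

theorem pot_start {G : Multigraph V E} {s : V} {x : V → ℝ} (hx : ∀ v, 0 ≤ x v) {e : E} {v : V}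
    (he : G.ends e = s(s, v)) (hv : v ≠ s) : pot G s x e v ≤ x v :=
  csInf_le (pot_bdd hx e v) (Or.inr (NW.start he hv (by simp)))

noncomputable def oth (G : Multigraph V E) (e : E) (v : V) : V :=
  if h : ∃ w, G.ends e = s(v, w) then h.choose else v

theorem oth_eq {G : Multigraph V E} {e : E} {v w : V} (h : G.ends e = s(v, w)) : oth G e v = w := by
  have hex : ∃ w, G.ends e = s(v, w) := ⟨w, h⟩
  unfold oth
  rw [dif_pos hex]
  have := hex.choose_spec
  exact (Sym2.congr_right.1 (h.symm.trans this)).symm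

theorem edge_sum {G : Multigraph V E} {s : V} {e : E} {a b : V} (hab : a ≠ b) (h : G.ends e = s(a, b))
    (g : V → ℝ) : ∑ v, (if v ≠ s ∧ v ∈ G.ends e then g v else 0) =
      (if a ≠ s then g a else 0) + (if b ≠ s then g b else 0) := by
  have : ∀ v, (if v ≠ s ∧ v ∈ G.ends e then g v else 0) =
      (if v = a then (if a ≠ s then g a else 0) else 0) + (if v = b then (if b ≠ s then g b else 0) else 0) := by
    intro v
    simp only [h, Sym2.mem_iff]
    by_cases h1 : v = a
    · subst h1; simp [hab]
    · by_cases h2 : v = b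
      · subst h2; simp [h1]
      · simp [h1, h2]
  simp only [this, sum_add_distrib, sum_ite_eq', mem_univ, if_true]

theorem swap_sum (G : Multigraph V E) (s : V) (F : E → ℕ) (g : E → V → ℝ) :
    ∑ v, (if v ≠ s then ∑ e ∈ D G v, (F e : ℝ) * g e v else 0) =
      ∑ e, (F e : ℝ) * ∑ v, (if v ≠ s ∧ v ∈ G.ends e then g e v else 0) := by
  simp_rw [mul_sum]
  rw [sum_comm]
  apply sum_congr rfl
  intro v _
  by_cases hv : v = s
  · simp [hv]
  · simp only [D, sum_filter]
    simp [hv]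

theorem weak_duality {G : Multigraph V E} {s : V} (hl : G.LoopFree) {F : E → ℕ} {x : V → ℝ} (hF : PB G s F)
    (hx : G.IsSCycleCover s x) : ∑ e ∈ D G s, (F e : ℝ) ≤ 4 * ∑ v, x v := by
  have hc := cov_of_cover hx
  obtain ⟨hx, hxs, _⟩ := hx
  have h1 : ∑ v, (if v ≠ s then ∑ e ∈ D G v, (F e : ℝ) * (pot G s x e (oth G e v) - x (oth G e v)) else 0) ≤
      ∑ v, (if v ≠ s then ∑ e ∈ D G v, (F e : ℝ) * pot G s x e v else 0) := by
    apply sum_le_sum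
    intro v _
    split_ifs with hv
    · apply local_ineq hF.le (hF.ok v hv)
      intro e he e' he' hne
      obtain ⟨w, hw⟩ := Sym2.mem_iff_exists.1 (mem_D.1 he)
      rw [oth_eq hw]
      exact pot_step hx hv hne hw
    · exact le_rfl
  have h2 : ∑ v, (if v ≠ s then ∑ e ∈ D G v, (F e : ℝ) * x v else 0) ≤ 4 * ∑ v, x v := by
    rw [mul_sum]
    apply sum_le_sum
    intro v _
    split_ifs with hv
    · rw [← sum_mul]
      exact mul_le_mul_of_nonneg_right (local_le hF.le (hF.ok v hv)) (hx v)
    · linarith [hx v]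
  rw [swap_sum G s F (fun e v => pot G s x e (oth G e v) - x (oth G e v)), swap_sum G s F (fun e v => pot G s x e v)] at h1
  rw [swap_sum G s F (fun e v => x v)] at h2
  have h3 : ∑ e, (F e : ℝ) * ∑ v, (if v ≠ s ∧ v ∈ G.ends e then pot G s x e v else 0) + ∑ e ∈ D G s, (F e : ℝ) ≤
      ∑ e, (F e : ℝ) * ∑ v, (if v ≠ s ∧ v ∈ G.ends e then (pot G s x e (oth G e v) - x (oth G e v)) else 0) +
      ∑ e, (F e : ℝ) * ∑ v, (if v ≠ s ∧ v ∈ G.ends e then x v else 0) := by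
    unfold D
    rw [sum_filter, ← sum_add_distrib, ← sum_add_distrib]
    apply sum_le_sum
    intro e _
    obtain ⟨⟨a, b⟩, hab⟩ := Quot.exists_rep (G.ends e)
    have hab : G.ends e = s(a, b) := hab.symm
    have hba : G.ends e = s(b, a) := by rw [hab, Sym2.eq_swap]
    have hne : a ≠ b := by
      rintro rfl; exact hl e (by rw [hab]; simp)
    rw [edge_sum hne hab, edge_sum hne hab, edge_sum hne hab, oth_eq hab, oth_eq hba]
    have hF0 : (0 : ℝ) ≤ F e := by positivity
    have hite : (if s ∈ G.ends e then (F e : ℝ) else 0) = (F e : ℝ) * (if s ∈ G.ends e then 1 else 0) := by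
      split_ifs <;> simp
    rw [hite, ← mul_add, ← mul_add]
    apply mul_le_mul_of_nonneg_left _ hF0
    simp only [hab, Sym2.mem_iff]
    by_cases ha : a = s
    · subst ha
      have := pot_start hx hab hne.symm
      have := pot_s hc e
      simp [hne.symm, hxs]; linarith
    · by_cases hb : b = s
      · subst hb
        have := pot_start hx hba hne
        have := pot_s hc e
        simp [hne, hxs]; linarith
      · have : s ≠ a := fun h => ha h.symm
        have : s ≠ b := fun h => hb h.symm
        simp [*]; linarith
  linarith

theorem cnt1_eq {G : Multigraph V E} {f : E → ℝ} {F : E → ℕ} (h : ∀ e, f e = (F e : ℝ) / 2) (v : V) :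
    G.cnt1 f v = n1 (D G v) F := by
  unfold Multigraph.cnt1 n1 D
  rw [Nat.card_eq_fintype_card, Fintype.card_subtype, filter_filter]
  congr 1
  apply filter_congr
  intro e _
  rw [h]
  have : (F e : ℝ) / 2 = 1 ↔ F e = 2 := by
    constructor
    · intro h; have : (F e : ℝ) = 2 := by linarith
      exact_mod_cast this
    · intro h; rw [h]; norm_num
  rw [this]

theorem cntH_eq {G : Multigraph V E} {f : E → ℝ} {F : E → ℕ} (h : ∀ e, f e = (F e : ℝ) / 2) (v : V) :
    G.cntH f v = nH (D G v) F := by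
  unfold Multigraph.cntH nH D
  rw [Nat.card_eq_fintype_card, Fintype.card_subtype, filter_filter]
  congr 1
  apply filter_congr
  intro e _
  rw [h]
  have : (F e : ℝ) / 2 = 1 / 2 ↔ F e = 1 := by
    constructor
    · intro h; have : (F e : ℝ) = 1 := by linarith
      exact_mod_cast this
    · intro h; rw [h]; norm_num
  rw [this]

theorem size_eq {G : Multigraph V E} {s : V} {f : E → ℝ} {F : E → ℕ} (h : ∀ e, f e = (F e : ℝ) / 2) :
    G.basicSize s f = (1 / 4) * ∑ e ∈ D G s, (F e : ℝ) := by
  unfold Multigraph.basicSize D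
  rw [sum_filter, mul_sum, mul_sum]
  apply sum_congr rfl
  intro e _
  rw [Set.indicator_apply]
  by_cases hs : s ∈ G.ends e
  · simp [hs, h]; ring
  · simp [hs]

theorem PB_of_basic {G : Multigraph V E} {s : V} {f : E → ℝ} (hf : G.IsBasicSCyclePacking s f) :
    ∃ F : E → ℕ, (∀ e, f e = (F e : ℝ) / 2) ∧ PB G s F := by
  obtain ⟨h1, h2, h3, _⟩ := hf
  have hex : ∀ e, ∃ k : ℕ, k ≤ 2 ∧ f e = (k : ℝ) / 2 := by
    intro e
    rcases h1 e with h | h | h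
    · exact ⟨0, by norm_num, by rw [h]; norm_num⟩
    · exact ⟨1, by norm_num, by rw [h]; norm_num⟩
    · exact ⟨2, by norm_num, by rw [h]; norm_num⟩
  choose F hle hF using hex
  refine ⟨F, hF, hle, ?_, ?_⟩
  · intro e he h
    have := h2 e he
    rw [hF, h] at this
    norm_num at this
  · intro v hv
    rw [← cnt1_eq hF, ← cntH_eq hF]
    unfold Ok
    rcases h3 v hv with h | h | h | h
    · left
      rw [cnt1_eq hF, cntH_eq hF, n1_zero, nH_zero]
      constructor <;> intro e he hk <;> have := h e (mem_D.1 he) <;> rw [hF, hk] at this <;> norm_num at this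
    · exact Or.inr (Or.inl h)
    · exact Or.inr (Or.inr (Or.inl h))
    · exact Or.inr (Or.inr (Or.inr h))

theorem n1_lt {S : Finset E} {F F' : E → ℕ} (h : ∀ e ∈ S, F e = 2 → F' e = 2) {g : E} (hg : g ∈ S)
    (h1 : F' g = 2) (h2 : F g ≠ 2) : n1 S F < n1 S F' := by
  unfold n1
  apply card_lt_card
  rw [ssubset_iff_of_subset]
  · exact ⟨g, mem_filter.2 ⟨hg, h1⟩, fun h => h2 (mem_filter.1 h).2⟩
  · intro e he
    rw [mem_filter] at he ⊢
    exact ⟨he.1, h e he.1 he.2⟩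

theorem PB_zero (G : Multigraph V E) (s : V) : PB G s (fun _ => 0) := by
  refine ⟨by simp, by simp, ?_⟩
  intro v _
  left
  constructor
  · rw [n1_zero]; simp
  · rw [nH_zero]; simp

theorem exists_opt (G : Multigraph V E) (s : V) : ∃ F, PB G s F ∧
    (∀ F', PB G s F' → n1 (D G s) F' ≤ n1 (D G s) F) ∧
    (∀ F', PB G s F' → n1 (D G s) F' = n1 (D G s) F → halves F ≤ halves F') := by
  have hb : ∀ F : E → ℕ, n1 (D G s) F ≤ Fintype.card E := by
    intro F; unfold n1; exact card_le_univ _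
  obtain ⟨F0, hF0, hmin⟩ := WellFounded.has_min (measure (fun F : E → ℕ => Fintype.card E - n1 (D G s) F)).wf
    {F | PB G s F} ⟨_, PB_zero G s⟩
  have hmax : ∀ F', PB G s F' → n1 (D G s) F' ≤ n1 (D G s) F0 := by
    intro F' hF'
    have h1 : ¬ (Fintype.card E - n1 (D G s) F' < Fintype.card E - n1 (D G s) F0) := hmin F' hF'
    have := hb F'
    have := hb F0
    omega
  obtain ⟨F, ⟨hF, hn⟩, hmin2⟩ := WellFounded.has_min (measure (fun F : E → ℕ => halves F)).wf
    {F | PB G s F ∧ n1 (D G s) F = n1 (D G s) F0} ⟨F0, hF0, rfl⟩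
  refine ⟨F, hF, fun F' h => by rw [hn]; exact hmax F' h, fun F' h h' => ?_⟩
  have : ¬ (halves F' < halves F) := hmin2 F' ⟨h, by rw [h', hn]⟩
  omega

theorem not_out1 {G : Multigraph V E} {s : V} {F : E → ℕ} (hmax : ∀ F', PB G s F' → n1 (D G s) F' ≤ n1 (D G s) F)
    (h : Out1 G s F ∅) : False := by
  obtain ⟨F', g, hP, hg, hFg, hag⟩ := h
  have hF0 : F g = 0 := by
    rcases hg.2 with h | h
    · exact h.1
    · simp at h
  have := n1_lt (S := D G s) (F := F) (F' := F') (g := g) ?_ (mem_D.2 hg.1.mem) (by omega) (by omega)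
  · have := hmax F' hP; omega
  · intro e he h2
    rw [hag e (mem_D.1 he) (by rintro rfl; omega)]; exact h2

theorem not_out2 {G : Multigraph V E} {s : V} {F : E → ℕ} (hmax : ∀ F', PB G s F' → n1 (D G s) F' ≤ n1 (D G s) F)
    (h : Out2 G s F ∅) : False := by
  obtain ⟨F1, C, g1, g2, hP, hag, hg1, hg2, hC⟩ := h
  have hF1 : F g1 = 0 := by
    rcases hg1.2 with h | h
    · exact h.1
    · simp at h
  have hF2 : F g2 = 0 := by
    rcases hg2.2 with h | h
    · exact h.1
    · simp at h
  have hPB : PB G s (fun e => if e ∈ C then 2 - F1 e else F1 e) := by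
    refine ⟨?_, ?_, ?_⟩
    · intro e
      have := hP.le e
      show (if e ∈ C then 2 - F1 e else F1 e) ≤ 2
      split_ifs <;> omega
    · intro e he
      have := hP.le e
      have := hP.ats e he
      show (if e ∈ C then 2 - F1 e else F1 e) ≠ 1
      split_ifs <;> omega
    · intro v hv
      rcases hC.loc v hv with h | ⟨a, b, hab, ha, hb, hva, hvb, hall, hh, ht⟩
      · have : ∀ d ∈ D G v, (if d ∈ C then 2 - F1 d else F1 d) = F1 d := by
          intro d hd
          rw [if_neg]
          intro hdC; exact h d hdC (mem_D.1 hd)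
        rw [n1_congr this, nH_congr this]; exact hP.ok v hv
      · refine ok_flip (mem_D.2 hva) (mem_D.2 hvb) hab hP.le (hP.ok v hv) hh ht ?_ (if_pos ha) (if_pos hb)
        intro d hd hda hdb
        apply if_neg
        intro hdC
        rcases hall d hdC (mem_D.1 hd) with h | h
        · exact hda h
        · exact hdb h
  have hs1 := hg1.1.mem
  have h3 := n1_lt (S := D G s) (F := F) (F' := fun e => if e ∈ C then 2 - F1 e else F1 e) (g := g1) ?_
    (mem_D.2 hs1) ?_ (by omega)
  · have := hmax _ hPB; omega
  · intro e he h2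
    have hes := mem_D.1 he
    show (if e ∈ C then 2 - F1 e else F1 e) = 2
    rw [if_neg, hag e hes, h2]
    rw [hC.ats e hes]
    rintro (rfl | rfl) <;> omega
  · show (if g1 ∈ C then 2 - F1 g1 else F1 g1) = 2
    rw [if_pos ((hC.ats g1 hs1).2 (Or.inl rfl)), hag g1 hs1, hF1]

theorem val_empty (G : Multigraph V E) (s : V) (F : E → ℕ) : val G s F ∅ ≤ n1 (D G s) F := by
  unfold val n1 D
  rw [filter_filter, card_filter]
  push_cast
  apply sum_le_sum
  intro e _
  unfold tm
  by_cases h : Nl G s e ∧ F e = 2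
  · rw [if_pos h, if_neg (by simp), if_pos ⟨h.1.mem, h.2⟩]
  · rw [if_neg h]; split_ifs <;> norm_num

section parity

variable {G : Multigraph V E} {s : V}

theorem cyc_next (W : G.Walk) (hW : W.IsCycle) (j : Fin W.len) :
    ∃ k : Fin W.len, W.verts j.succ = W.verts k.castSucc := by
  by_cases h : j.1 + 1 < W.len
  · exact ⟨⟨j.1 + 1, h⟩, by congr 1⟩
  · refine ⟨⟨0, W.len_pos⟩, ?_⟩
    have h1 : W.verts 0 = W.verts (Fin.last W.len) := hW.1
    have h2 : j.succ = Fin.last W.len := by apply Fin.ext; simp; omega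
    rw [h2, ← h1]; rfl

theorem cyc_prev (hl : G.LoopFree) (W : G.Walk) (hW : W.IsCycle) (i : Fin W.len) :
    ∃ j : Fin W.len, j ≠ i ∧ W.verts i.castSucc ∈ G.ends (W.edges j) := by
  obtain ⟨i, hi⟩ := i
  cases i with
  | zero =>
    have h1 : W.verts 0 = W.verts (Fin.last W.len) := hW.1
    have hlen : 1 < W.len := by
      by_contra hcon
      have h2 : (Fin.last W.len) = Fin.succ ⟨0, hi⟩ := by apply Fin.ext; simp; omega
      have h3 := W.valid ⟨0, hi⟩
      rw [← h2, ← h1] at h3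
      exact hl _ (by rw [h3]; exact Sym2.mk_isDiag_iff.2 rfl)
    refine ⟨⟨W.len - 1, by omega⟩, ?_, ?_⟩
    · intro h; have := congrArg Fin.val h; simp at this; omega
    · rw [W.valid, Sym2.mem_iff]
      right
      have h2 : Fin.succ ⟨W.len - 1, by omega⟩ = Fin.last W.len := by apply Fin.ext; simp; omega
      rw [h2, ← h1]; rfl
  | succ i =>
    refine ⟨⟨i, by omega⟩, ?_, ?_⟩
    · intro h; have := congrArg Fin.val h; simp at this
    · rw [W.valid, Sym2.mem_iff]
      right; rfl

theorem parity (hl : G.LoopFree) {F : E → ℕ} (hF : PB G s F)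
    (hmin : ∀ F', PB G s F' → n1 (D G s) F' = n1 (D G s) F → halves F ≤ halves F')
    (W : G.Walk) (hW : W.IsCycle) (hH : ∀ j, F (W.edges j) = 1) :
    Odd (∑ i : Fin W.len, n1 (D G (W.verts i.castSucc)) F) ∧
      ∀ i : Fin W.len, nH (D G (W.verts i.castSucc)) F = 2 ∧ n1 (D G (W.verts i.castSucc)) F ≤ 1 := by
  have hG : LS G s := by
    intro e v h; exact absurd (by rw [h]; exact Sym2.mk_isDiag_iff.2 rfl) (hl e)
  obtain ⟨w, hw⟩ : ∃ w : Fin W.len → V, ∀ i, w i = W.verts i.castSucc := ⟨_, fun _ => rfl⟩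
  have hinj : Function.Injective w := by
    intro i j h; rw [hw, hw] at h; exact hW.2.2 h
  have hmem : ∀ i, w i ∈ G.ends (W.edges i) := by
    intro i; rw [W.valid, hw]; simp
  have hws : ∀ i, w i ≠ s := by
    intro i h
    exact hF.ats _ (h ▸ hmem i) (hH i)
  have hnH : ∀ i, nH (D G (w i)) F = 2 ∧ n1 (D G (w i)) F ≤ 1 := by
    intro i
    have h1 := hF.ok _ (hws i)
    have h2 : nH (D G (w i)) F ≠ 0 := fun h => nH_zero.1 h _ (mem_D.2 (hmem i)) (hH i)
    unfold Ok at h1; omega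
  have hinC : ∀ i e, w i ∈ G.ends e → F e = 1 → ∃ j, e = W.edges j := by
    intro i e he hFe
    obtain ⟨j, hji, hj⟩ := cyc_prev hl W hW i
    rw [← hw] at hj
    have hsub : ({W.edges i, W.edges j} : Finset E) ⊆ (D G (w i)).filter (fun e => F e = 1) := by
      intro d hd
      rw [mem_insert, mem_singleton] at hd
      rw [mem_filter, mem_D]
      rcases hd with rfl | rfl
      · exact ⟨hmem i, hH i⟩
      · exact ⟨hj, hH j⟩
    have hc : ({W.edges i, W.edges j} : Finset E).card = 2 :=
      card_pair (fun h => hji (hW.2.1 h).symm)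
    have heq := eq_of_subset_of_card_le hsub (by rw [hc]; exact (hnH i).1.le)
    have : e ∈ ({W.edges i, W.edges j} : Finset E) := by
      rw [heq, mem_filter, mem_D]; exact ⟨he, hFe⟩
    rw [mem_insert, mem_singleton] at this
    rcases this with h | h
    · exact ⟨i, h⟩
    · exact ⟨j, h⟩
  suffices hodd : Odd (∑ i : Fin W.len, n1 (D G (w i)) F) by
    simp only [hw] at hodd hnH
    exact ⟨hodd, hnH⟩
  have hpos := W.len_pos
  let i0 : Fin W.len := ⟨0, hpos⟩
  obtain ⟨F', hle, hag, hlt, hok, hH0, hn1⟩ := round G s (w i0) hG (hws i0) F hF (by rw [(hnH i0).1]; norm_num)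
  have hags : ∀ e, s ∈ G.ends e → F' e = F e := fun d hd => hag d (hF.ats d hd)
  have hone : n1 (D G (w i0)) F' = 1 := by
    by_contra hcon
    have hPB : PB G s F' := by
      refine ⟨hle, ?_, ?_⟩
      · intro d hd; rw [hags d hd]; exact hF.ats d hd
      · intro v hv
        by_cases hvu : v = w i0
        · subst hvu; unfold Ok; omega
        · exact hok v hv hvu
    have := hmin F' hPB (n1_congr (fun e he => hags e (mem_D.1 he)))
    omega
  have hzero : ∀ k (hk : k < W.len), nH (D G (w ⟨k, hk⟩)) F' = 0 := by
    intro k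
    induction k with
    | zero => intro _; exact hH0
    | succ k ih =>
      intro hk
      have h1 := nH_zero.1 (ih (by omega)) _ (mem_D.2 (hmem _))
      have h2 : W.edges ⟨k, by omega⟩ ∈ D G (w ⟨k + 1, hk⟩) := by
        rw [mem_D, W.valid, Sym2.mem_iff, hw]; right; rfl
      have h3 : nH (D G (w ⟨k + 1, hk⟩)) F' < nH (D G (w ⟨k + 1, hk⟩)) F := by
        unfold nH
        apply card_lt_card
        rw [ssubset_iff_of_subset]
        · exact ⟨_, mem_filter.2 ⟨h2, hH _⟩, fun h => h1 (mem_filter.1 h).2⟩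
        · intro e he
          rw [mem_filter] at he ⊢
          refine ⟨he.1, ?_⟩
          by_contra h
          exact h (by rw [← hag e h]; exact he.2)
      rw [(hnH _).1] at h3
      have h4 := hok (w ⟨k + 1, hk⟩) (hws _) (fun h => by
        have := congrArg Fin.val (hinj h); simp [i0] at this)
      unfold Ok at h4; omega
  have hoddF' : Odd (∑ i : Fin W.len, n1 (D G (w i)) F') := by
    rw [← add_sum_erase univ _ (mem_univ i0), hone]
    apply Odd.add_even odd_one
    apply even_sum
    intro i hi
    have h4 := hok (w i) (hws _) (fun h => (mem_erase.1 hi).1 (hinj h))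
    have h5 := hzero i.1 i.2
    have h5 : nH (D G (w i)) F' = 0 := h5
    unfold Ok at h4
    have : n1 (D G (w i)) F' = 0 ∨ n1 (D G (w i)) F' = 2 := by omega
    rcases this with h | h <;> rw [h]
    · exact Even.zero
    · exact even_two
  have hsplit : ∀ i, n1 (D G (w i)) F' = n1 (D G (w i)) F +
      ∑ e, (if F e = 1 ∧ F' e = 2 then (if w i ∈ G.ends e then 1 else 0) else 0) := by
    intro i
    unfold n1 D
    rw [filter_filter, filter_filter, card_filter, card_filter, ← sum_add_distrib]
    apply sum_congr rfl
    intro e _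
    by_cases h1 : F e = 1
    · simp [h1, and_comm, ite_and]
    · rw [hag e h1]; simp [h1]
  have heven : Even (∑ i : Fin W.len, ∑ e, (if F e = 1 ∧ F' e = 2 then (if w i ∈ G.ends e then 1 else 0) else 0)) := by
    rw [sum_comm]
    apply even_sum
    intro e _
    by_cases hc : F e = 1 ∧ F' e = 2
    swap
    · simp only [if_neg hc]; simp
    simp only [if_pos hc]
    by_cases hex : ∃ i, w i ∈ G.ends e
    · obtain ⟨i, hi⟩ := hex
      obtain ⟨j, rfl⟩ := hinC i e hi hc.1
      obtain ⟨k, hk⟩ := cyc_next W hW j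
      have hends : G.ends (W.edges j) = s(w j, w k) := by rw [W.valid, hw, hw, hk]
      have hjk : j ≠ k := by
        rintro rfl
        exact hl _ (by rw [hends]; exact Sym2.mk_isDiag_iff.2 rfl)
      have : ∀ i, (if w i ∈ G.ends (W.edges j) then 1 else 0) = (if i = j then 1 else 0) + (if i = k then 1 else 0) := by
        intro i
        simp only [hends, Sym2.mem_iff, hinj.eq_iff]
        by_cases h1 : i = j
        · subst h1; simp [hjk]
        · simp [h1]
      simp only [this, sum_add_distrib, sum_ite_eq', mem_univ, if_true]
      exact even_two
    · push Not at hex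
      simp [hex]
  rw [sum_congr rfl (fun i _ => hsplit i), sum_add_distrib] at hoddF'
  exact (Nat.odd_add.1 hoddF').2 heven

end parity

theorem main (G : Multigraph V E) (hl : G.LoopFree) (s : V) :
    ∃ (f : E → ℝ) (x : V → ℝ),
      G.IsBasicSCyclePacking s f ∧ G.IsSCycleCover s x ∧ Multigraph.HalfIntegral x ∧
      G.basicSize s f = ∑ v, x v ∧
      (∀ f' : E → ℝ, G.IsBasicSCyclePacking s f' → G.basicSize s f' ≤ G.basicSize s f) ∧
      (∀ x' : V → ℝ, G.IsSCycleCover s x' → ∑ v, x v ≤ ∑ v, x' v) := by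
  have hG : LS G s := by
    intro e v h; exact absurd (by rw [h]; exact Sym2.mk_isDiag_iff.2 rfl) (hl e)
  obtain ⟨F, hF, hmax, hmin⟩ := exists_opt G s
  have h0 : Out0 G s F ∅ := by
    rcases main_lemma _ G s F ∅ rfl hG hF (by simp) with h | h | h
    · exact h
    · exact (not_out1 hmax h).elim
    · exact (not_out2 hmax h).elim
  obtain ⟨x, hx, hxs, hc, hv⟩ := h0
  have hcov := cover_of_cov hl (half_nonneg hx) hxs hc
  have hf : ∀ e, (fun e => (F e : ℝ) / 2) e = (F e : ℝ) / 2 := fun _ => rfl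
  have hsum : ∑ e ∈ D G s, (F e : ℝ) = 2 * n1 (D G s) F := by
    have h1 := sum_split (S := D G s) hF.le (fun _ => (1 : ℝ))
    simp only [mul_one, sum_const, nsmul_eq_mul] at h1
    have h2 : nH (D G s) F = 0 := nH_zero.2 (fun e he => hF.ats e (mem_D.1 he))
    unfold nH at h2
    rw [h1, h2]; unfold n1; simp
  have hv2 : 2 * ∑ v, x v ≤ (n1 (D G s) F : ℝ) := by
    have h1 := val_empty G s F
    have h2 : (val G s F ∅ : ℝ) ≤ (n1 (D G s) F : ℝ) := by exact_mod_cast h1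
    linarith
  have hsize := size_eq (G := G) (s := s) hf
  have hwd : ∀ x' : V → ℝ, G.IsSCycleCover s x' →
      G.basicSize s (fun e => (F e : ℝ) / 2) ≤ ∑ v, x' v := by
    intro x' hx'
    have := weak_duality hl hF hx'
    rw [hsize]; linarith
  have heq : G.basicSize s (fun e => (F e : ℝ) / 2) = ∑ v, x v := by
    apply le_antisymm (hwd x hcov)
    rw [hsize, hsum]; linarith
  refine ⟨fun e => (F e : ℝ) / 2, x, ⟨?_, ?_, ?_, ?_⟩, hcov, hx, heq, ?_, ?_⟩
  · intro e
    have := hF.le e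
    dsimp only
    generalize F e = k at *
    interval_cases k <;> norm_num
  · intro e he
    have h1 := hF.le e
    have h2 := hF.ats e he
    dsimp only
    generalize F e = k at *
    interval_cases k
    · norm_num
    · exact absurd rfl h2
    · norm_num
  · intro v hv
    unfold Multigraph.IsTypeI Multigraph.IsTypeH Multigraph.IsTypeT
    rw [cnt1_eq hf, cntH_eq hf]
    rcases hF.ok v hv with h | h | h | h
    · left
      intro e he
      have h1 := n1_zero.1 h.1 e (mem_D.2 he)
      have h2 := nH_zero.1 h.2 e (mem_D.2 he)
      have h3 := hF.le e
      have h4 : F e = 0 := by omega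
      simp [h4]
    · exact Or.inr (Or.inl h)
    · exact Or.inr (Or.inr (Or.inl h))
    · exact Or.inr (Or.inr (Or.inr h))
  · intro W hW hj
    have hH : ∀ j, F (W.edges j) = 1 := by
      intro j
      have h1 : (F (W.edges j) : ℝ) / 2 = 1 / 2 := hj j
      have h2 : (F (W.edges j) : ℝ) = 1 := by linarith
      exact_mod_cast h2
    obtain ⟨h1, h2⟩ := parity hl hF hmin W hW hH
    have h3 : Nat.card {i : Fin W.len // G.IsTypeT (fun e => (F e : ℝ) / 2) (W.verts i.castSucc)} =
        ∑ i : Fin W.len, n1 (D G (W.verts i.castSucc)) F := by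
      rw [Nat.card_eq_fintype_card, Fintype.card_subtype, card_filter]
      apply sum_congr rfl
      intro i _
      unfold Multigraph.IsTypeT
      rw [cnt1_eq hf, cntH_eq hf]
      have := h2 i
      split_ifs <;> omega
    rw [h3]; exact h1
  · intro f' hf'
    obtain ⟨F', hF', hP'⟩ := PB_of_basic hf'
    rw [heq, size_eq hF']
    have := weak_duality hl hP' hcov
    linarith
  · intro x' hx'
    rw [← heq]; exact hwd x' hx'


end

end SC



/-- the maximum size of a basic `s`-cycle packing equals the
minimum size of an `s`-cycle cover, witnessed by a maximum basic packing `f`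
and a half-integral minimum cover `x` of equal size. -/
theorem stmt13_max_basic_eq_min_cover {V E : Type} [Fintype V] [Fintype E]
    (G : Multigraph V E) (hloop : G.LoopFree) (s : V) :
    ∃ (f : E → ℝ) (x : V → ℝ),
      G.IsBasicSCyclePacking s f ∧ G.IsSCycleCover s x ∧ Multigraph.HalfIntegral x ∧
      G.basicSize s f = ∑ v, x v ∧
      (∀ f' : E → ℝ, G.IsBasicSCyclePacking s f' → G.basicSize s f' ≤ G.basicSize s f) ∧
      (∀ x' : V → ℝ, G.IsSCycleCover s x' → ∑ v, x v ≤ ∑ v, x' v) := by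
  exact SC.main G hloop s
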